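/- arXiv:2212.12009 — 10 statements merged into one kernel-verified Lean document; each statement's English description precedes it below -/
import Mathlib

section
/- Let Θ ⊆ ℝ contain three elements θ_l < θ_m < θ_h, and let z > 0. If there exist functions g₁, g₂ : ℝ → ℝ and f₁, f₂, h : Θ → ℝ such that −|x − θ|^z = g₁(x)·f₁(θ) + g₂(x)·f₂(θ) + h(θ) for all x ∈ ℝ and θ ∈ Θ, then z = 2. -/
/-!
Two linear conditions on three unknowns always have a nonzero solution, so there is
`(a, b, c) ≠ 0` annihilating both `f₁` and `f₂` on `θl, θm, θh`. Applying this combination to the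
separable form shows that `a |x - θl|^z + b |x - θm|^z + c |x - θh|^z` is constant in `x`.

On `x > θh` the absolute values disappear and the identity can be differentiated three times. If
`z ∉ {1, 2}`, the factors `z`, `z - 1`, `z - 2` can be cancelled, and at any one point the three
derivatives give a Vandermonde system in the distinct numbers `x - θl, x - θm, x - θh`, whence
`a = b = c = 0`. If `z = 1`, comparing the constant at `θl - 1, θl, θm, θh` gives the same.
-/

/-- A function `f : Θ → ℝ` is single crossing if `θ ↦ sgn (f θ)` is monotone
(increasing or decreasing). -/
def SingleCrossing {Θ : Type*} [PartialOrder Θ] (f : Θ → ℝ) : Prop :=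
  Monotone (fun θ => Real.sign (f θ)) ∨ Antitone (fun θ => Real.sign (f θ))

/-- Strictly single crossing: single crossing and no two ordered zeros. -/
def StrictSingleCrossing {Θ : Type*} [PartialOrder Θ] (f : Θ → ℝ) : Prop :=
  SingleCrossing f ∧ ∀ θ' θ'' : Θ, θ' < θ'' → ¬(f θ' = 0 ∧ f θ'' = 0)

/-- A subset of a partially ordered set is an interval. -/
def IsIntervalSet {Θ : Type*} [PartialOrder Θ] (S : Set Θ) : Prop :=
  ∀ θl θm θh : Θ, θl ∈ S → θh ∈ S → θl < θm → θm < θh → θm ∈ S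

/-- Single-crossing differences. -/
def SCD {A : Type*} {Θ : Type*} [PartialOrder Θ] (u : A → Θ → ℝ) : Prop :=
  ∀ a a' : A, SingleCrossing (fun θ => u a θ - u a' θ)

/-- Strict single-crossing differences. -/
def SSCD {A : Type*} {Θ : Type*} [PartialOrder Θ] (u : A → Θ → ℝ) : Prop :=
  ∀ a a' : A, a ≠ a' → StrictSingleCrossing (fun θ => u a θ - u a' θ)

/-- The choice correspondence `C_u(S, θ)`. -/
def choiceCorr {A : Type*} {Θ : Type*} (u : A → Θ → ℝ) (S : Set A) (θ : Θ) : Set A :=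
  {a ∈ S | ∀ b ∈ S, u b θ ≤ u a θ}

/-- `f₁` ratio dominates `f₂`: conditions (RD) and (RD+). -/
def RatioDominates {Θ : Type*} [PartialOrder Θ] (f₁ f₂ : Θ → ℝ) : Prop :=
  (∀ θl θh : Θ, θl < θh → f₁ θl * f₂ θh ≤ f₁ θh * f₂ θl) ∧
  (∀ θl θm θh : Θ, θl < θm → θm < θh →
    (f₁ θl * f₂ θh = f₁ θh * f₂ θl ↔
      (f₁ θl * f₂ θm = f₁ θm * f₂ θl ∧ f₁ θm * f₂ θh = f₁ θh * f₂ θm)))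

/-- `f₁` and `f₂` are ratio ordered. -/
def RatioOrdered {Θ : Type*} [PartialOrder Θ] (f₁ f₂ : Θ → ℝ) : Prop :=
  RatioDominates f₁ f₂ ∨ RatioDominates f₂ f₁

/-- `f₁` strictly ratio dominates `f₂`. -/
def StrictRatioDominates {Θ : Type*} [PartialOrder Θ] (f₁ f₂ : Θ → ℝ) : Prop :=
  ∀ θl θh : Θ, θl < θh → f₁ θl * f₂ θh < f₁ θh * f₂ θl

/-- `f₁` and `f₂` are strictly ratio ordered. -/
def StrictRatioOrdered {Θ : Type*} [PartialOrder Θ] (f₁ f₂ : Θ → ℝ) : Prop :=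
  StrictRatioDominates f₁ f₂ ∨ StrictRatioDominates f₂ f₁

/-- The environment `(A, Θ, u)` is convex. -/
def ConvexEnv {A : Type*} {Θ : Type*} (u : A → Θ → ℝ) : Prop :=
  ∀ a a' : A, ∀ lam : ℝ, 0 < lam → lam < 1 →
    ∃ a'' : A, ∀ θ : Θ, u a'' θ = lam * u a θ + (1 - lam) * u a' θ

/-- `A` is minimal with respect to `u`: no utility-indistinguishable pair. -/
def MinimalActions {A : Type*} {Θ : Type*} (u : A → Θ → ℝ) : Prop :=
  ∀ a a' : A, a ≠ a' → ∃ θ : Θ, u a θ ≠ u a' θ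

/-- `f : Z × Θ → ℝ` is linear combinations SC-preserving. -/
def LinCombSCPreserving {Z : Type*} {Θ : Type*} [PartialOrder Θ] (f : Z → Θ → ℝ) : Prop :=
  ∀ μ : Z → ℝ, (Function.support μ).Finite →
    SingleCrossing (fun θ => ∑ᶠ z, μ z * f z θ)

/-- `f : Z × Θ → ℝ` is linear combinations SSC-preserving. -/
def LinCombSSCPreserving {Z : Type*} {Θ : Type*} [PartialOrder Θ] (f : Z → Θ → ℝ) : Prop :=
  ∀ μ : Z → ℝ, (Function.support μ).Finite →
    ((∀ θ : Θ, (∑ᶠ z, μ z * f z θ) = 0) ∨ StrictSingleCrossing (fun θ => ∑ᶠ z, μ z * f z θ))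

/-- `f : Z × Θ → ℝ` is linear combinations monotonicity-preserving. -/
def LinCombMonPreserving {Z : Type*} {Θ : Type*} [PartialOrder Θ] (f : Z → Θ → ℝ) : Prop :=
  ∀ μ : Z → ℝ, (Function.support μ).Finite →
    (Monotone (fun θ => ∑ᶠ z, μ z * f z θ) ∨ Antitone (fun θ => ∑ᶠ z, μ z * f z θ))

/-- A finite-support lottery on `X`. -/
def IsLottery {X : Type*} (P : X → ℝ) : Prop :=
  (∀ x, 0 ≤ P x) ∧ (Function.support P).Finite ∧ (∑ᶠ x, P x) = 1

/-- Single-crossing expectational differences. -/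
def SCED {X : Type*} {Θ : Type*} [PartialOrder Θ] (v : X → Θ → ℝ) : Prop :=
  ∀ P Q : X → ℝ, IsLottery P → IsLottery Q →
    SingleCrossing (fun θ => (∑ᶠ x, P x * v x θ) - ∑ᶠ x, Q x * v x θ)

/-- Differentiating a constant combination of three shifted powers and cancelling the nonzero
exponent gives a vanishing combination with exponent lowered by one. -/
lemma shifted_powers_deriv {l m h a b c k w : ℝ} (hlm : l < m) (hmh : m < h) (hw : w ≠ 0)
    (H : ∀ x, h < x → a * (x - l) ^ w + b * (x - m) ^ w + c * (x - h) ^ w = k) :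
    ∀ x, h < x → a * (x - l) ^ (w - 1) + b * (x - m) ^ (w - 1) + c * (x - h) ^ (w - 1) = 0 := by
  intro x hx
  have d : ∀ t, t < x → HasDerivAt (fun y : ℝ => (y - t) ^ w) (1 * w * (x - t) ^ (w - 1)) x :=
    fun t ht => ((hasDerivAt_id x).sub_const t).rpow_const (Or.inl (sub_pos.2 ht).ne')
  have D := (((d l (by linarith)).const_mul a).add ((d m (by linarith)).const_mul b)).add
    ((d h hx).const_mul c)
  have D0 := (hasDerivAt_const x k).congr_of_eventuallyEq
    (f₁ := fun x => a * (x - l) ^ w + b * (x - m) ^ w + c * (x - h) ^ w)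
    (Filter.eventually_of_mem (Ioi_mem_nhds hx) (fun y hy => H y hy))
  have E := D.unique D0
  apply mul_left_cancel₀ hw
  linear_combination E

/-- Testing the three moment conditions against the quadratic `(t - v) * (t - w)` isolates the
weight at the node `u`. -/
lemma vandermonde_three {p q r u v w : ℝ} (huv : u ≠ v) (huw : u ≠ w)
    (h0 : p + q + r = 0) (h1 : p * u + q * v + r * w = 0)
    (h2 : p * u ^ 2 + q * v ^ 2 + r * w ^ 2 = 0) : p = 0 := by
  have : p * ((u - v) * (u - w)) = 0 := by
    linear_combination h2 - (v + w) * h1 + v * w * h0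
  exact (mul_eq_zero.1 this).resolve_right (mul_ne_zero (sub_ne_zero.2 huv) (sub_ne_zero.2 huw))

/-- For an exponent other than `2`, no nontrivial combination of the three power losses is
constant. -/
lemma power_losses_independent {l m h a b c k z : ℝ} (hlm : l < m) (hmh : m < h) (hz : 0 < z)
    (hz2 : z ≠ 2)
    (H : ∀ x, a * |x - l| ^ z + b * |x - m| ^ z + c * |x - h| ^ z = k) :
    a = 0 ∧ b = 0 ∧ c = 0 := by
  by_cases hz1 : z = 1
  · subst hz1
    simp only [Real.rpow_one] at H
    have e1 := H (l - 1)
    have e2 := H l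
    have e3 := H m
    have e4 := H h
    rw [abs_of_neg (by linarith), abs_of_neg (by linarith), abs_of_neg (by linarith)] at e1
    rw [sub_self, abs_zero, abs_of_neg (by linarith), abs_of_neg (by linarith)] at e2
    rw [sub_self, abs_zero, abs_of_pos (by linarith), abs_of_neg (by linarith)] at e3
    rw [sub_self, abs_zero, abs_of_pos (by linarith), abs_of_pos (by linarith)] at e4
    have s1 : a + b + c = 0 := by linear_combination e1 - e2
    have s2 : a - b - c = 0 := by
      apply mul_left_cancel₀ (sub_pos.2 hlm).ne'
      linear_combination e3 - e2
    have s3 : a + b - c = 0 := by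
      apply mul_left_cancel₀ (sub_pos.2 hmh).ne'
      linear_combination e4 - e3
    refine ⟨?_, ?_, ?_⟩ <;> linarith
  · have H0 : ∀ x, h < x → a * (x - l) ^ z + b * (x - m) ^ z + c * (x - h) ^ z = k := by
      intro x hx
      have := H x
      rwa [abs_of_pos (by linarith), abs_of_pos (by linarith), abs_of_pos (by linarith)] at this
    have H1 := shifted_powers_deriv hlm hmh hz.ne' H0
    have H2 := shifted_powers_deriv hlm hmh (sub_ne_zero.2 hz1) H1
    have H3 := shifted_powers_deriv hlm hmh
      (show z - 1 - 1 ≠ 0 from fun e => hz2 (by linarith)) H2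
    have hx : h < h + 1 := by linarith
    have K1 := H1 _ hx
    have K2 := H2 _ hx
    have K3 := H3 _ hx
    generalize hw : z - 1 - 1 - 1 = w at K3
    rw [show z - 1 - 1 = w + 1 by linarith] at K2
    rw [show z - 1 = w + (2 : ℕ) by push_cast; linarith] at K1
    have pu : 0 < h + 1 - l := by linarith
    have pv : 0 < h + 1 - m := by linarith
    have pw : 0 < h + 1 - h := by linarith
    rw [Real.rpow_add_one pu.ne', Real.rpow_add_one pv.ne', Real.rpow_add_one pw.ne'] at K2
    rw [Real.rpow_add_natCast pu.ne', Real.rpow_add_natCast pv.ne',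
      Real.rpow_add_natCast pw.ne'] at K1
    have qu := (Real.rpow_pos_of_pos pu w).ne'
    have qv := (Real.rpow_pos_of_pos pv w).ne'
    have qw := (Real.rpow_pos_of_pos pw w).ne'
    have nuv : h + 1 - l ≠ h + 1 - m := fun e => hlm.ne (by linarith)
    have nuw : h + 1 - l ≠ h + 1 - h := fun e => (hlm.trans hmh).ne (by linarith)
    have nvw : h + 1 - m ≠ h + 1 - h := fun e => hmh.ne (by linarith)
    refine ⟨(mul_eq_zero.1 (vandermonde_three nuv nuw K3 ?_ ?_)).resolve_right qu,
      (mul_eq_zero.1 (vandermonde_three nuv.symm nvw (q := a * (h + 1 - l) ^ w)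
        (r := c * (h + 1 - h) ^ w) ?_ ?_ ?_)).resolve_right qv,
      (mul_eq_zero.1 (vandermonde_three nuw.symm nvw.symm (q := a * (h + 1 - l) ^ w)
        (r := b * (h + 1 - m) ^ w) ?_ ?_ ?_)).resolve_right qw⟩
    · linear_combination K2
    · linear_combination K1
    · linear_combination K3
    · linear_combination K2
    · linear_combination K1
    · linear_combination K3
    · linear_combination K2
    · linear_combination K1

/-- Two linear conditions on three unknowns have a nonzero solution. -/
lemma exists_annihilator (p q : Fin 3 → ℝ) :
    ∃ v : Fin 3 → ℝ, v ≠ 0 ∧ p 0 * v 0 + p 1 * v 1 + p 2 * v 2 = 0 ∧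
      q 0 * v 0 + q 1 * v 1 + q 2 * v 2 = 0 := by
  -- The zero third row turns the two conditions into a singular square system.
  obtain ⟨v, hv, hM⟩ := Matrix.exists_mulVec_eq_zero_iff
    (M := !![p 0, p 1, p 2; q 0, q 1, q 2; 0, 0, 0]) |>.2 (by simp [Matrix.det_fin_three])
  refine ⟨v, hv, ?_, ?_⟩
  · simpa [Matrix.mulVec, dotProduct, Fin.sum_univ_three] using congrFun hM 0
  · simpa [Matrix.mulVec, dotProduct, Fin.sum_univ_three] using congrFun hM 1

/-- If the power loss function has the two-statistic separable
form on a `Θ ⊆ ℝ` containing three ordered elements, then `z = 2`. -/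
theorem powerLoss_separable_form_implies_quadratic (Θ : Set ℝ)
    (θl θm θh : ℝ) (meml : θl ∈ Θ) (memm : θm ∈ Θ) (memh : θh ∈ Θ)
    (hlm : θl < θm) (hmh : θm < θh)
    (z : ℝ) (hz : 0 < z)
    (g₁ g₂ : ℝ → ℝ) (f₁ f₂ h : Θ → ℝ)
    (heq : ∀ (x : ℝ) (θ : Θ), -(|x - (θ : ℝ)| ^ z) = g₁ x * f₁ θ + g₂ x * f₂ θ + h θ) :
    z = 2 := by
  by_contra hz2
  obtain ⟨v, hv, h1, h2⟩ := exists_annihilator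
    ![f₁ ⟨θl, meml⟩, f₁ ⟨θm, memm⟩, f₁ ⟨θh, memh⟩] ![f₂ ⟨θl, meml⟩, f₂ ⟨θm, memm⟩, f₂ ⟨θh, memh⟩]
  simp at h1 h2
  obtain ⟨h0, h1', h2'⟩ := power_losses_independent (a := v 0) (b := v 1) (c := v 2)
    (k := -(v 0 * h ⟨θl, meml⟩ + v 1 * h ⟨θm, memm⟩ + v 2 * h ⟨θh, memh⟩)) hlm hmh hz hz2 (by
      intro x
      have el := heq x ⟨θl, meml⟩
      have em := heq x ⟨θm, memm⟩
      have eh := heq x ⟨θh, memh⟩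
      simp only at el em eh
      linear_combination -v 0 * el - v 1 * em - v 2 * eh - g₁ x * h1 - g₂ x * h2)
  apply hv
  ext i
  fin_cases i <;> simpa
end

section
/- Let Θ be a partially ordered set in which every pair of elements has an upper bound and a lower bound in Θ. Let n ∈ ℕ, let A₁, …, A_n be sets with A = A₁ × … × A_n, let g_i : A_i → ℝ have convex range (the image of g_i is a convex subset of ℝ) for each i, let f_i : Θ → ℝ for each i, and define u : A × Θ → ℝ by u(a, θ) = Σ_{i=1}^n g_i(a_i)·f_i(θ). Then u has single-crossing differences (SCD) if and only if there exist vectors λ^I, λ^{II} ∈ ℝⁿ, a function h : Θ → ℝ, and functions f^I, f^{II} : Θ → ℝ that are each single crossing and ratio ordered, such that u(a, θ) = (Σ_{i=1}^n λ^I_i·g_i(a_i))·f^I(θ) + (Σ_{i=1}^n λ^{II}_i·g_i(a_i))·f^{II}(θ) + h(θ) for all a ∈ A and θ ∈ Θ. -/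
lemma sign_le_sign_iff (x y : ℝ) :
    Real.sign x ≤ Real.sign y ↔ (0 < x → 0 < y) ∧ (0 ≤ x → 0 ≤ y) := by
  rcases lt_trichotomy x 0 with hx | rfl | hx <;> rcases lt_trichotomy y 0 with hy | rfl | hy <;>
    simp [*, Real.sign_of_neg, Real.sign_of_pos, Real.sign_zero, not_lt_of_gt, not_le_of_gt,
      le_of_lt]

lemma sign_lt_sign_iff (x y : ℝ) :
    Real.sign x < Real.sign y ↔ (x ≤ 0 ∧ 0 < y) ∨ (x < 0 ∧ 0 ≤ y) := by
  rw [← not_le, sign_le_sign_iff]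
  grind

/-- The evaluation of the functions in `W` at a pair of points. -/
def evalPair {Θ : Type*} (W : Submodule ℝ (Θ → ℝ)) (l h : Θ) : W →ₗ[ℝ] ℝ × ℝ :=
  ((LinearMap.proj l).prod (LinearMap.proj h)).comp W.subtype

lemma mem_ker_evalPair {Θ : Type*} {W : Submodule ℝ (Θ → ℝ)} {l h : Θ} {w : W} :
    w ∈ LinearMap.ker (evalPair W l h) ↔ w.1 l = 0 ∧ w.1 h = 0 := by
  simp [evalPair]

section Chains

variable {Θ : Type*} [PartialOrder Θ]

/-- On a poset directed in both directions, a function that is neither increasing nor decreasing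
has a strict peak or a strict valley on some chain. -/
lemma monotone_or_antitone_of_chains
    (hub : ∀ θ₁ θ₂ : Θ, ∃ θ : Θ, θ₁ ≤ θ ∧ θ₂ ≤ θ)
    (hlb : ∀ θ₁ θ₂ : Θ, ∃ θ : Θ, θ ≤ θ₁ ∧ θ ≤ θ₂) (s : Θ → ℝ)
    (hpeak : ∀ a b c, a ≤ b → b ≤ c → ¬(s a < s b ∧ s c < s b))
    (hvalley : ∀ a b c, a ≤ b → b ≤ c → ¬(s b < s a ∧ s b < s c)) :
    Monotone s ∨ Antitone s := by
  by_contra hcon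
  simp only [not_or, Monotone, Antitone, not_forall, not_le] at hcon
  obtain ⟨⟨a, b, hab, h1⟩, ⟨c, d, hcd, h2⟩⟩ := hcon
  obtain ⟨p, hpa, hpc⟩ := hlb a c
  obtain ⟨q, hbq, hdq⟩ := hub b d
  have e1 := hpeak p a b hpa hab
  have e2 := hvalley a b q hab hbq
  have e3 := hpeak c d q hcd hdq
  have e4 := hvalley p c d hpc hcd
  grind

lemma SingleCrossing.eq_zero_of_between {f : Θ → ℝ} (hf : SingleCrossing f) {a b c : Θ}
    (hab : a ≤ b) (hbc : b ≤ c) (ha : f a = 0) (hc : f c = 0) : f b = 0 := by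
  rcases hf with hf | hf <;>
  · have h1 := (sign_le_sign_iff _ _).1 (hf hab)
    have h2 := (sign_le_sign_iff _ _).1 (hf hbc)
    grind

lemma SingleCrossing.pos_right {f : Θ → ℝ} (hf : SingleCrossing f) {a b c : Θ}
    (hab : a ≤ b) (hbc : b ≤ c) (ha : f a = 0) (hb : 0 < f b) : 0 < f c := by
  rcases hf with hf | hf <;>
  · have h1 := (sign_le_sign_iff _ _).1 (hf hab)
    have h2 := (sign_le_sign_iff _ _).1 (hf hbc)
    grind

lemma SingleCrossing.pos_left {f : Θ → ℝ} (hf : SingleCrossing f) {a b c : Θ}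
    (hab : a ≤ b) (hbc : b ≤ c) (hc : f c = 0) (hb : 0 < f b) : 0 < f a := by
  rcases hf with hf | hf <;>
  · have h1 := (sign_le_sign_iff _ _).1 (hf hab)
    have h2 := (sign_le_sign_iff _ _).1 (hf hbc)
    grind

lemma SingleCrossing.not_peak {f : Θ → ℝ} (hf : SingleCrossing f) {a b c : Θ}
    (hab : a ≤ b) (hbc : b ≤ c) :
    ¬(Real.sign (f a) < Real.sign (f b) ∧ Real.sign (f c) < Real.sign (f b)) := by
  rcases hf with hf | hf
  · exact fun h => absurd (hf hbc) (not_le.2 h.2)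
  · exact fun h => absurd (hf hab) (not_le.2 h.1)

lemma SingleCrossing.not_valley {f : Θ → ℝ} (hf : SingleCrossing f) {a b c : Θ}
    (hab : a ≤ b) (hbc : b ≤ c) :
    ¬(Real.sign (f b) < Real.sign (f a) ∧ Real.sign (f b) < Real.sign (f c)) := by
  rcases hf with hf | hf
  · exact fun h => absurd (hf hab) (not_le.2 h.1)
  · exact fun h => absurd (hf hbc) (not_le.2 h.2)

lemma SingleCrossing.of_pos_mul {f : Θ → ℝ} {ε : ℝ} (hε : 0 < ε)
    (hf : SingleCrossing fun θ => ε * f θ) : SingleCrossing f := by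
  have h : ∀ x : ℝ, Real.sign (ε * x) = Real.sign x := by
    intro x
    apply le_antisymm <;> rw [sign_le_sign_iff] <;> simp [hε]
  simpa only [SingleCrossing, h] using hf

/-- The values of a single crossing function along a chain cannot have the form `(p t, t, q t)`
with `t ≠ 0` and `p, q ≤ 0`. -/
lemma SingleCrossing.eq_zero_of_nonpos_multiples {f : Θ → ℝ} (hf : SingleCrossing f) {a b c : Θ}
    (hab : a ≤ b) (hbc : b ≤ c) {p q : ℝ} (hp : p ≤ 0) (hq : q ≤ 0)
    (ha : f a = p * f b) (hc : f c = q * f b) : f b = 0 := by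
  have h1 := hf.not_peak hab hbc
  have h2 := hf.not_valley hab hbc
  rw [sign_lt_sign_iff, sign_lt_sign_iff] at h1 h2
  rcases lt_trichotomy (f b) 0 with hb | hb | hb
  · exact absurd ⟨Or.inr ⟨hb, by nlinarith⟩, Or.inr ⟨hb, by nlinarith⟩⟩ h2
  · exact hb
  · exact absurd ⟨Or.inl ⟨by nlinarith, hb⟩, Or.inl ⟨by nlinarith, hb⟩⟩ h1

/-- The values of a single crossing function along a chain cannot have the form `(t, 0, q t)`
with `t ≠ 0` and `q > 0`. -/
lemma SingleCrossing.eq_zero_of_pos_multiple {f : Θ → ℝ} (hf : SingleCrossing f) {a b c : Θ}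
    (hab : a ≤ b) (hbc : b ≤ c) {q : ℝ} (hq : 0 < q)
    (hb : f b = 0) (hc : f c = q * f a) : f a = 0 := by
  have h1 := hf.not_peak hab hbc
  have h2 := hf.not_valley hab hbc
  rw [sign_lt_sign_iff, sign_lt_sign_iff] at h1 h2
  rcases lt_trichotomy (f a) 0 with ha | ha | ha
  · exact absurd ⟨Or.inr ⟨ha, hb.ge⟩, Or.inr ⟨by nlinarith, hb.ge⟩⟩ h1
  · exact ha
  · exact absurd ⟨Or.inl ⟨hb.le, ha⟩, Or.inl ⟨hb.le, by rw [hc]; positivity⟩⟩ h2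

/-- The determinant of the vectors `(f₁ h, f₂ h)` and `(f₁ l, f₂ l)`. -/
def ratioDet (f₁ f₂ : Θ → ℝ) (l h : Θ) : ℝ := f₁ h * f₂ l - f₁ l * f₂ h

/-- If the linear functional `(α, β)` does not vanish at `u`, then any `v` parallel to `u` is the
multiple of `u` by the ratio of the values of the functional at `v` and `u`. -/
lemma eq_div_mul_of_det_eq_zero {α β u₁ u₂ v₁ v₂ : ℝ} (hdet : u₁ * v₂ = v₁ * u₂)
    (hu : α * u₁ + β * u₂ ≠ 0) :
    v₁ = (α * v₁ + β * v₂) / (α * u₁ + β * u₂) * u₁ ∧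
      v₂ = (α * v₁ + β * v₂) / (α * u₁ + β * u₂) * u₂ := by
  constructor <;> rw [div_mul_eq_mul_div, eq_div_iff hu]
  · linear_combination -β * hdet
  · linear_combination α * hdet

lemma no_peak_of_ratioDominates {f₁ f₂ : Θ → ℝ} (h₁ : SingleCrossing f₁)
    (h₂ : SingleCrossing f₂) (hrd : RatioDominates f₁ f₂) (α β : ℝ) {a b c : Θ}
    (hab : a ≤ b) (hbc : b ≤ c) :
    ¬(Real.sign (α * f₁ a + β * f₂ a) < Real.sign (α * f₁ b + β * f₂ b) ∧
      Real.sign (α * f₁ c + β * f₂ c) < Real.sign (α * f₁ b + β * f₂ b)) := by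
  rintro ⟨hl, hr⟩
  have hab' : a < b := lt_of_le_of_ne hab (by rintro rfl; exact lt_irrefl _ hl)
  have hbc' : b < c := lt_of_le_of_ne hbc (by rintro rfl; exact lt_irrefl _ hr)
  have dab := hrd.1 a b hab'
  have dbc := hrd.1 b c hbc'
  have dac := hrd.1 a c (hab'.trans hbc')
  have hplus := hrd.2 a b c hab' hbc'
  rw [sign_lt_sign_iff] at hl hr
  set xa := α * f₁ a + β * f₂ a with hxa
  set xb := α * f₁ b + β * f₂ b with hxb
  set xc := α * f₁ c + β * f₂ c with hxc
  -- The linear relation between three planar vectors, evaluated at `(α, β)`.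
  have key : (f₁ b * f₂ a - f₁ a * f₂ b) * xc + (f₁ c * f₂ b - f₁ b * f₂ c) * xa
      = (f₁ c * f₂ a - f₁ a * f₂ c) * xb := by
    rw [hxa, hxb, hxc]; ring
  rcases lt_or_ge 0 xb with hb | hb
  · have ha : xa ≤ 0 := by grind
    have hc : xc ≤ 0 := by grind
    have t1 := mul_nonpos_of_nonneg_of_nonpos (sub_nonneg.2 dab) hc
    have t2 := mul_nonpos_of_nonneg_of_nonpos (sub_nonneg.2 dbc) ha
    have z : f₁ a * f₂ c = f₁ c * f₂ a := by
      by_contra hne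
      have := mul_pos (sub_pos.2 (lt_of_le_of_ne dac hne)) hb
      linarith
    obtain ⟨zab, zbc⟩ := hplus.1 z
    obtain ⟨pa1, pa2⟩ := eq_div_mul_of_det_eq_zero (α := α) (β := β)
      (u₁ := f₁ b) (u₂ := f₂ b) (v₁ := f₁ a) (v₂ := f₂ a) zab.symm hb.ne'
    obtain ⟨pc1, pc2⟩ := eq_div_mul_of_det_eq_zero (α := α) (β := β)
      (u₁ := f₁ b) (u₂ := f₂ b) (v₁ := f₁ c) (v₂ := f₂ c) zbc hb.ne'
    have hp := div_nonpos_of_nonpos_of_nonneg ha hb.le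
    have hq := div_nonpos_of_nonpos_of_nonneg hc hb.le
    have e1 := h₁.eq_zero_of_nonpos_multiples hab hbc hp hq pa1 pc1
    have e2 := h₂.eq_zero_of_nonpos_multiples hab hbc hp hq pa2 pc2
    rw [hxb, e1, e2] at hb
    simp at hb
  · have hb0 : xb = 0 := by grind
    have ha : xa < 0 := by grind
    have hc : xc < 0 := by grind
    rw [hb0, mul_zero] at key
    have t1 := mul_nonpos_of_nonneg_of_nonpos (sub_nonneg.2 dab) hc.le
    have t2 := mul_nonpos_of_nonneg_of_nonpos (sub_nonneg.2 dbc) ha.le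
    have zab : f₁ a * f₂ b = f₁ b * f₂ a := by
      by_contra hne
      have := mul_neg_of_pos_of_neg (sub_pos.2 (lt_of_le_of_ne dab hne)) hc
      linarith
    have zbc : f₁ b * f₂ c = f₁ c * f₂ b := by
      by_contra hne
      have := mul_neg_of_pos_of_neg (sub_pos.2 (lt_of_le_of_ne dbc hne)) ha
      linarith
    have zac := hplus.2 ⟨zab, zbc⟩
    obtain ⟨pb1, pb2⟩ := eq_div_mul_of_det_eq_zero (α := α) (β := β)
      (u₁ := f₁ a) (u₂ := f₂ a) (v₁ := f₁ b) (v₂ := f₂ b) zab ha.ne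
    obtain ⟨pc1, pc2⟩ := eq_div_mul_of_det_eq_zero (α := α) (β := β)
      (u₁ := f₁ a) (u₂ := f₂ a) (v₁ := f₁ c) (v₂ := f₂ c) zac ha.ne
    rw [← hxb, hb0, zero_div, zero_mul] at pb1 pb2
    have hq := div_pos_of_neg_of_neg hc ha
    have e1 := h₁.eq_zero_of_pos_multiple hab hbc hq pb1 pc1
    have e2 := h₂.eq_zero_of_pos_multiple hab hbc hq pb2 pc2
    rw [hxa, e1, e2] at ha
    simp at ha

lemma singleCrossing_combination
    (hub : ∀ θ₁ θ₂ : Θ, ∃ θ : Θ, θ₁ ≤ θ ∧ θ₂ ≤ θ)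
    (hlb : ∀ θ₁ θ₂ : Θ, ∃ θ : Θ, θ ≤ θ₁ ∧ θ ≤ θ₂)
    {f₁ f₂ : Θ → ℝ} (h₁ : SingleCrossing f₁) (h₂ : SingleCrossing f₂)
    (hrd : RatioDominates f₁ f₂) (α β : ℝ) :
    SingleCrossing fun θ => α * f₁ θ + β * f₂ θ := by
  refine monotone_or_antitone_of_chains hub hlb _
    (fun a b c hab hbc => no_peak_of_ratioDominates h₁ h₂ hrd α β hab hbc)
    (fun a b c hab hbc => ?_)
  have h := no_peak_of_ratioDominates h₁ h₂ hrd (-α) (-β) hab hbc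
  have e : ∀ x : Θ, -α * f₁ x + -β * f₂ x = -(α * f₁ x + β * f₂ x) := fun x => by ring
  simpa only [e, Real.sign_neg, neg_lt_neg_iff] using h

/-- When all linear combinations of `f₁` and `f₂` are single crossing, a positive determinant stays
positive if the order interval is enlarged. -/
lemma ratioDet_pos_of_le {f₁ f₂ : Θ → ℝ}
    (hsc : ∀ α β : ℝ, SingleCrossing fun θ => α * f₁ θ + β * f₂ θ) {p l h q : Θ}
    (hpl : p ≤ l) (hlh : l ≤ h) (hhq : h ≤ q) (hpos : 0 < ratioDet f₁ f₂ l h) :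
    0 < ratioDet f₁ f₂ p q := by
  have h1 : 0 < ratioDet f₁ f₂ l q := by
    have := (hsc (f₂ l) (-f₁ l)).pos_right hlh hhq (by ring)
      (by unfold ratioDet at hpos; linarith)
    unfold ratioDet; linarith
  have := (hsc (-f₂ q) (f₁ q)).pos_left hpl (hlh.trans hhq) (by ring)
    (by unfold ratioDet at h1; linarith)
  unfold ratioDet; linarith

/-- All linear combinations being single crossing gives (RD+). -/
lemma det_eq_zero_iff_of_combinations {f₁ f₂ : Θ → ℝ}
    (hsc : ∀ α β : ℝ, SingleCrossing fun θ => α * f₁ θ + β * f₂ θ) (a b c : Θ)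
    (hab : a < b) (hbc : b < c) :
    f₁ a * f₂ c = f₁ c * f₂ a ↔
      (f₁ a * f₂ b = f₁ b * f₂ a ∧ f₁ b * f₂ c = f₁ c * f₂ b) := by
  constructor
  · intro h
    have e1 := (hsc (f₂ a) (-f₁ a)).eq_zero_of_between hab.le hbc.le (by ring) (by linarith)
    have e2 := (hsc (f₂ c) (-f₁ c)).eq_zero_of_between hab.le hbc.le (by linarith) (by ring)
    constructor <;> linarith
  · rintro ⟨h1, h2⟩
    by_contra hne
    have hD : f₁ c * f₂ a - f₁ a * f₂ c ≠ 0 := fun h => hne (by linarith)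
    have z1 : f₁ b = 0 := by
      have : f₁ b * (f₁ c * f₂ a - f₁ a * f₂ c) = 0 := by
        linear_combination -f₁ c * h1 - f₁ a * h2
      exact (mul_eq_zero.1 this).resolve_right hD
    have z2 : f₂ b = 0 := by
      have : f₂ b * (f₁ c * f₂ a - f₁ a * f₂ c) = 0 := by
        linear_combination -f₂ c * h1 - f₂ a * h2
      exact (mul_eq_zero.1 this).resolve_right hD
    -- The combination with these coefficients takes the same nonzero value at `a` and at `c`.
    have ha := (hsc (f₂ a - f₂ c) (f₁ c - f₁ a)).eq_zero_of_pos_multiple hab.le hbc.le one_pos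
      (by rw [z1, z2]; ring) (by ring)
    exact hD (by linear_combination ha)

lemma ratioOrdered_of_combinations
    (hub : ∀ θ₁ θ₂ : Θ, ∃ θ : Θ, θ₁ ≤ θ ∧ θ₂ ≤ θ)
    (hlb : ∀ θ₁ θ₂ : Θ, ∃ θ : Θ, θ ≤ θ₁ ∧ θ ≤ θ₂) {f₁ f₂ : Θ → ℝ}
    (hsc : ∀ α β : ℝ, SingleCrossing fun θ => α * f₁ θ + β * f₂ θ) :
    RatioOrdered f₁ f₂ := by
  have hsc' : ∀ α β : ℝ, SingleCrossing fun θ => α * f₂ θ + β * f₁ θ := fun α β => by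
    simpa only [add_comm] using hsc β α
  by_cases hneg : ∀ l h : Θ, l < h → f₁ l * f₂ h ≤ f₁ h * f₂ l
  · exact Or.inl ⟨hneg, fun a b c hab hbc => det_eq_zero_iff_of_combinations hsc a b c hab hbc⟩
  · refine Or.inr ⟨fun l h hlh => ?_,
      fun a b c hab hbc => det_eq_zero_iff_of_combinations hsc' a b c hab hbc⟩
    push Not at hneg
    obtain ⟨l', h', hlh', hlt⟩ := hneg
    by_contra hcon
    obtain ⟨p, hpl, hpl'⟩ := hlb l l'
    obtain ⟨q, hhq, hhq'⟩ := hub h h'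
    have e1 := ratioDet_pos_of_le hsc hpl hlh.le hhq (by unfold ratioDet; linarith)
    have e2 := ratioDet_pos_of_le hsc' hpl' hlh'.le hhq' (by unfold ratioDet; linarith)
    unfold ratioDet at e1 e2
    linarith

/-- A finite-dimensional space of single crossing functions has dimension at most two. -/
lemma finrank_le_two
    (hub : ∀ θ₁ θ₂ : Θ, ∃ θ : Θ, θ₁ ≤ θ ∧ θ₂ ≤ θ)
    (hlb : ∀ θ₁ θ₂ : Θ, ∃ θ : Θ, θ ≤ θ₁ ∧ θ ≤ θ₂)
    (W : Submodule ℝ (Θ → ℝ)) [FiniteDimensional ℝ W] (hW : ∀ w ∈ W, SingleCrossing w) :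
    Module.finrank ℝ W ≤ 2 := by
  rcases isEmpty_or_nonempty Θ with hΘ | ⟨⟨t₀⟩⟩
  · rw [Module.finrank_zero_of_subsingleton]; omega
  let S : Set (Θ × Θ) := {x | x.1 ≤ x.2}
  obtain ⟨⟨l, h⟩, hlh : l ≤ h, hmin⟩ := exists_minimalFor_of_wellFoundedLT (fun x => x ∈ S)
    (fun x : Θ × Θ => Module.finrank ℝ (LinearMap.ker (evalPair W x.1 x.2))) ⟨(t₀, t₀), le_rfl⟩
  have hinj : Function.Injective (evalPair W l h) := by
    rw [← LinearMap.ker_eq_bot, Submodule.eq_bot_iff]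
    intro w hw
    ext t
    obtain ⟨l', hl, hlt⟩ := hlb l t
    obtain ⟨h', hh, hht⟩ := hub h t
    have hle : LinearMap.ker (evalPair W l' h') ≤ LinearMap.ker (evalPair W l h) := by
      intro v hv
      rw [mem_ker_evalPair] at hv ⊢
      exact ⟨(hW _ v.2).eq_zero_of_between hl (hlh.trans hh) hv.1 hv.2,
        (hW _ v.2).eq_zero_of_between (hl.trans hlh) hh hv.1 hv.2⟩
    have hfr := hmin (j := (l', h')) (hlt.trans hht) (Submodule.finrank_mono hle)
    have heq := Submodule.eq_of_le_of_finrank_le hle hfr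
    rw [← heq, mem_ker_evalPair] at hw
    exact (hW _ w.2).eq_zero_of_between hlt hht hw.1 hw.2
  simpa using LinearMap.finrank_le_finrank_of_injective hinj

end Chains

lemma exists_pair_spanning {V : Type*} [AddCommGroup V] [Module ℝ V] [FiniteDimensional ℝ V]
    (h : Module.finrank ℝ V ≤ 2) : ∃ x y : V, ∀ v : V, ∃ α β : ℝ, v = α • x + β • y := by
  obtain ⟨b⟩ : Nonempty (Module.Basis (Fin (Module.finrank ℝ V)) ℝ V) := ⟨Module.finBasis ℝ V⟩
  generalize Module.finrank ℝ V = d at h b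
  interval_cases d
  · exact ⟨0, 0, fun v => ⟨0, 0, by simpa using (b.sum_repr v).symm⟩⟩
  · exact ⟨b 0, 0, fun v => ⟨b.repr v 0, 0, by simpa using (b.sum_repr v).symm⟩⟩
  · exact ⟨b 0, b 1, fun v => ⟨b.repr v 0, b.repr v 1, by
      rw [← Fin.sum_univ_two fun i => b.repr v i • b i, b.sum_repr]⟩⟩

/-- Every direction `μ` supported on the coordinates where `g i` is not constant is, up to a
positive factor, the difference of the images under `g` of two action profiles. The convexity of
the ranges allows any sufficiently small factor. -/
lemma exists_scaled_differences {n : ℕ} {A : Fin n → Type*} [hA : ∀ i, Nonempty (A i)]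
    (g : ∀ i, A i → ℝ) (hconv : ∀ i, Convex ℝ (Set.range (g i))) (μ : Fin n → ℝ)
    (hμ : ∀ i, (∀ x y, g i x = g i y) → μ i = 0) :
    ∃ ε > 0, ∃ a a' : ∀ i, A i, ∀ i, g i (a i) - g i (a' i) = ε * μ i := by
  have hev : ∀ i, ∀ᶠ ε in nhdsWithin (0 : ℝ) (Set.Ioi 0),
      ∃ x y : A i, g i x - g i y = ε * μ i := by
    intro i
    by_cases hc : ∀ x y, g i x = g i y
    · obtain ⟨x⟩ := hA i
      exact Filter.Eventually.of_forall fun ε => ⟨x, x, by simp [hμ i hc]⟩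
    obtain ⟨x, y, hxy⟩ : ∃ x y, g i x < g i y := by
      push Not at hc
      obtain ⟨x, y, hne⟩ := hc
      rcases lt_or_gt_of_ne hne with h | h
      exacts [⟨x, y, h⟩, ⟨y, x, h⟩]
    have hlim : Filter.Tendsto (fun ε : ℝ => ε * |μ i|) (nhdsWithin 0 (Set.Ioi 0)) (nhds 0) := by
      have : Filter.Tendsto (fun ε : ℝ => ε * |μ i|) (nhds 0) (nhds (0 * |μ i|)) :=
        (continuous_id.mul continuous_const).tendsto 0
      rw [zero_mul] at this
      exact this.mono_left nhdsWithin_le_nhds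
    filter_upwards [hlim.eventually (gt_mem_nhds (sub_pos.2 hxy)), self_mem_nhdsWithin]
      with ε hε hpos
    have hpos' : (0 : ℝ) < ε := hpos
    have hnn : 0 ≤ ε * |μ i| := by positivity
    obtain ⟨z, hz⟩ := (hconv i).ordConnected.out ⟨x, rfl⟩ ⟨y, rfl⟩
      (show g i x + ε * |μ i| ∈ Set.Icc (g i x) (g i y) from ⟨by linarith, by linarith⟩)
    rcases le_total 0 (μ i) with h | h
    · exact ⟨z, x, by rw [hz, abs_of_nonneg h]; ring⟩
    · exact ⟨x, z, by rw [hz, abs_of_nonpos h]; ring⟩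
  obtain ⟨ε, hε, hpos⟩ := ((Filter.eventually_all.2 hev).and self_mem_nhdsWithin).exists
  choose a a' h using hε
  exact ⟨ε, hpos, a, a', h⟩

/-- A multidimensional utility has SCD iff it depends on at most
two summary dimensions with single-crossing, ratio-ordered weights. -/
theorem multidim_scd_iff {Θ : Type*} [PartialOrder Θ]
    (hub : ∀ θ₁ θ₂ : Θ, ∃ θ : Θ, θ₁ ≤ θ ∧ θ₂ ≤ θ)
    (hlb : ∀ θ₁ θ₂ : Θ, ∃ θ : Θ, θ ≤ θ₁ ∧ θ ≤ θ₂)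
    {n : ℕ} {A : Fin n → Type*} (g : ∀ i, A i → ℝ)
    (hconv : ∀ i, Convex ℝ (Set.range (g i)))
    (f : Fin n → Θ → ℝ)
    (u : (∀ i, A i) → Θ → ℝ)
    (hu : ∀ (a : ∀ i, A i) (θ : Θ), u a θ = ∑ i, g i (a i) * f i θ) :
    SCD u ↔
      ∃ (lamI lamII : Fin n → ℝ) (fI fII h : Θ → ℝ),
        SingleCrossing fI ∧ SingleCrossing fII ∧ RatioOrdered fI fII ∧
        (∀ (a : ∀ i, A i) (θ : Θ),
          u a θ = (∑ i, lamI i * g i (a i)) * fI θ +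
                    (∑ i, lamII i * g i (a i)) * fII θ + h θ) := by
  classical
  constructor
  · intro hscd
    by_cases hne : ∀ i, Nonempty (A i)
    swap
    · have hempty : ∀ _ : ∀ i, A i, False := fun a => hne fun i => ⟨a i⟩
      have h0 : SingleCrossing fun _ : Θ => (0 : ℝ) := Or.inl fun _ _ _ => le_rfl
      exact ⟨0, 0, fun _ => 0, fun _ => 0, fun _ => 0, h0, h0, Or.inl (by simp [RatioDominates]),
        fun a => (hempty a).elim⟩
    -- `f'` discards the coordinates in which `g` is constant.
    let f' : Fin n → Θ → ℝ := fun i => if ∀ x y, g i x = g i y then 0 else f i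
    let W : Submodule ℝ (Θ → ℝ) := Submodule.span ℝ (Set.range f')
    have : FiniteDimensional ℝ W := FiniteDimensional.span_of_finite ℝ (Set.finite_range f')
    have hW : ∀ w ∈ W, SingleCrossing w := by
      intro w hw
      obtain ⟨c, rfl⟩ := (Submodule.mem_span_range_iff_exists_fun ℝ).1 hw
      let μ : Fin n → ℝ := fun i => if ∀ x y, g i x = g i y then 0 else c i
      obtain ⟨ε, hε, a, a', haa⟩ := exists_scaled_differences g hconv μ
        (fun i hi => if_pos hi)
      refine SingleCrossing.of_pos_mul hε ?_
      convert hscd a a' using 2 with θ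
      rw [hu, hu, ← Finset.sum_sub_distrib, Finset.sum_apply, Finset.mul_sum]
      refine Finset.sum_congr rfl fun i _ => ?_
      rw [← sub_mul, haa]
      by_cases hi : ∀ x y, g i x = g i y
      · simp only [f', μ, if_pos hi, Pi.smul_apply, Pi.zero_apply, smul_zero, mul_zero, zero_mul]
      · simp only [f', μ, if_neg hi, Pi.smul_apply, smul_eq_mul, mul_assoc]
    obtain ⟨x, y, hxy⟩ := exists_pair_spanning (finrank_le_two hub hlb W hW)
    have hf' : ∀ i, ∃ α β : ℝ, ∀ θ, f' i θ = α * x.1 θ + β * y.1 θ := by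
      intro i
      obtain ⟨α, β, h⟩ := hxy ⟨f' i, Submodule.subset_span ⟨i, rfl⟩⟩
      exact ⟨α, β, fun θ => congrFun (congrArg Subtype.val h) θ⟩
    choose lamI lamII hlam using hf'
    let a₀ : ∀ i, A i := fun i => (hne i).some
    refine ⟨lamI, lamII, x.1, y.1, fun θ => ∑ i, g i (a₀ i) * (f i θ - f' i θ),
      hW _ x.2, hW _ y.2, ratioOrdered_of_combinations hub hlb
        (fun α β => hW _ (W.add_mem (W.smul_mem α x.2) (W.smul_mem β y.2))), fun a θ => ?_⟩
    rw [hu, Finset.sum_mul, Finset.sum_mul, ← Finset.sum_add_distrib, ← Finset.sum_add_distrib]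
    refine Finset.sum_congr rfl fun i _ => ?_
    -- Either `g i` is constant, or `f' i = f i`.
    have hi : (g i (a i) - g i (a₀ i)) * (f i θ - f' i θ) = 0 := by
      by_cases hi : ∀ x y, g i x = g i y
      · rw [hi (a i) (a₀ i), sub_self, zero_mul]
      · simp only [f', if_neg hi, sub_self, mul_zero]
    linear_combination hi + g i (a i) * hlam i θ
  · rintro ⟨lamI, lamII, fI, fII, h, hI, hII, hro, hrep⟩ a a'
    have key : ∀ α β : ℝ, SingleCrossing fun θ => α * fI θ + β * fII θ := by
      intro α β
      rcases hro with hro | hro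
      · exact singleCrossing_combination hub hlb hI hII hro α β
      · simpa only [add_comm] using singleCrossing_combination hub hlb hII hI hro β α
    convert key ((∑ i, lamI i * g i (a i)) - ∑ i, lamI i * g i (a' i))
      ((∑ i, lamII i * g i (a i)) - ∑ i, lamII i * g i (a' i)) using 2 with θ
    rw [hrep, hrep]
    ring
end

section
/- Let Θ be a partially ordered set in which every pair of elements has an upper bound and a lower bound in Θ, let A be a set, and let u : A × Θ → ℝ be such that the environment (A, Θ, u) is convex. Then u has monotonic differences (MD), i.e., for all a, a' ∈ A the function θ ↦ u(a,θ) − u(a',θ) is monotone, if and only if there exist functions g₁, g₂ : A → ℝ and f₁, h : Θ → ℝ with f₁ monotone such that u(a, θ) = g₁(a)·f₁(θ) + g₂(a) + h(θ) for all a ∈ A and θ ∈ Θ. -/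
theorem mono_or_anti_const_mul {Θ : Type*} [PartialOrder Θ] {f : Θ → ℝ}
    (hf : Monotone f ∨ Antitone f) (k m : ℝ) :
    Monotone (fun θ => k * f θ + m) ∨ Antitone (fun θ => k * f θ + m) := by
  rcases le_total 0 k with hk | hk <;> rcases hf with hf | hf
  · exact Or.inl fun x y hxy => by have := mul_le_mul_of_nonneg_left (hf hxy) hk; simpa using this
  · exact Or.inr fun x y hxy => by have := mul_le_mul_of_nonneg_left (hf hxy) hk; simpa using this
  · exact Or.inr fun x y hxy => by have := mul_le_mul_of_nonpos_left (hf hxy) hk; simpa using this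
  · exact Or.inl fun x y hxy => by have := mul_le_mul_of_nonpos_left (hf hxy) hk; simpa using this

theorem eq_of_mono_or_anti {Θ : Type*} [PartialOrder Θ] {f : Θ → ℝ}
    (hf : Monotone f ∨ Antitone f) {x y z : Θ} (hxz : x ≤ z) (hzy : z ≤ y) (h : f x = f y) :
    f z = f x := by
  rcases hf with hf | hf
  · have h1 := hf hxz
    have h2 := hf hzy
    linarith
  · have h1 := hf hxz
    have h2 := hf hzy
    linarith

/-- Differences relative to `a₀` are closed, up to scaling, under the combinations `d b - c • d a`:
according to the sign of `c` and of `1 - c`, the terms can be grouped into two convex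
combinations of actions. -/
theorem exists_comb_eq_diff {Θ A : Type*} {u : A → Θ → ℝ} (hconv : ConvexEnv u)
    (a₀ a b : A) (c : ℝ) :
    ∃ (p q : A) (k : ℝ), ∀ θ,
      (u b θ - u a₀ θ) - c * (u a θ - u a₀ θ) = k * (u p θ - u q θ) := by
  rcases lt_trichotomy c 0 with hc | rfl | hc
  · have h1 : 0 < 1 - c := by linarith
    obtain ⟨p, hp⟩ := hconv b a (1 / (1 - c)) (by positivity)
      (by rw [div_lt_one h1]; linarith)
    refine ⟨p, a₀, 1 - c, fun θ => ?_⟩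
    rw [hp]
    field_simp
    ring
  · exact ⟨b, a₀, 1, fun θ => by ring⟩
  · rcases lt_trichotomy c 1 with hc1 | rfl | hc1
    · obtain ⟨q, hq⟩ := hconv a a₀ c hc hc1
      exact ⟨b, q, 1, fun θ => by rw [hq]; ring⟩
    · exact ⟨b, a, 1, fun θ => by ring⟩
    · obtain ⟨p, hp⟩ := hconv b a₀ (1 / c) (by positivity) (by rw [div_lt_one hc]; exact hc1)
      refine ⟨p, a, c, fun θ => ?_⟩
      rw [hp]
      field_simp
      ring

/-- If every combination `g - c • f` is monotone or antitone and `f l ≠ f h` for some `l ≤ h`,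
then `g` is affine in `f`, with slope read off from the values at `l` and `h`. -/
theorem eq_of_comb_mono {Θ : Type*} [PartialOrder Θ]
    (hub : ∀ θ₁ θ₂ : Θ, ∃ θ : Θ, θ₁ ≤ θ ∧ θ₂ ≤ θ)
    (hlb : ∀ θ₁ θ₂ : Θ, ∃ θ : Θ, θ ≤ θ₁ ∧ θ ≤ θ₂)
    {f g : Θ → ℝ} (hf : Monotone f ∨ Antitone f)
    (hg : ∀ c : ℝ, Monotone (fun θ => g θ - c * f θ) ∨ Antitone (fun θ => g θ - c * f θ))
    {l h : Θ} (hlh : l ≤ h) (hne : f l ≠ f h) (θ : Θ) :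
    g θ = (g h - g l) / (f h - f l) * f θ + (g l - (g h - g l) / (f h - f l) * f l) := by
  obtain ⟨L, hLl, hLθ⟩ := hlb l θ
  obtain ⟨H, hhH, hθH⟩ := hub h θ
  have hLH : f H - f L ≠ 0 := by
    intro h0
    have hE : f L = f H := by linarith
    have h1 := eq_of_mono_or_anti hf hLl (hlh.trans hhH) hE
    have h2 := eq_of_mono_or_anti hf (hLl.trans hlh) hhH hE
    exact hne (h1.trans h2.symm)
  obtain ⟨c, hc⟩ : ∃ c, c * (f H - f L) = g H - g L := ⟨_, div_mul_cancel₀ _ hLH⟩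
  have hE : g L - c * f L = g H - c * f H := by linarith
  have h1 := eq_of_mono_or_anti (hg c) hLl (hlh.trans hhH) hE
  have h2 := eq_of_mono_or_anti (hg c) (hLl.trans hlh) hhH hE
  have h3 := eq_of_mono_or_anti (hg c) hLθ hθH hE
  -- the values at `l` and `h` identify the slope
  have hs : (g h - g l) / (f h - f l) = c := by
    rw [div_eq_iff (sub_ne_zero.mpr hne.symm)]
    linarith
  rw [hs]
  linarith

/-- In a convex environment, `u` has monotonic differences iff it
takes the form `u(a,θ) = g₁(a)f₁(θ) + g₂(a) + h(θ)` with `f₁` monotone. -/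
theorem md_in_convex_env_iff {Θ A : Type*} [PartialOrder Θ]
    (hub : ∀ θ₁ θ₂ : Θ, ∃ θ : Θ, θ₁ ≤ θ ∧ θ₂ ≤ θ)
    (hlb : ∀ θ₁ θ₂ : Θ, ∃ θ : Θ, θ ≤ θ₁ ∧ θ ≤ θ₂)
    (u : A → Θ → ℝ) (hconv : ConvexEnv u) :
    (∀ a a' : A,
      Monotone (fun θ => u a θ - u a' θ) ∨ Antitone (fun θ => u a θ - u a' θ)) ↔
      ∃ (g₁ g₂ : A → ℝ) (f₁ h : Θ → ℝ),
        (Monotone f₁ ∨ Antitone f₁) ∧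
        (∀ (a : A) (θ : Θ), u a θ = g₁ a * f₁ θ + g₂ a + h θ) := by
  constructor
  · intro hmd
    rcases isEmpty_or_nonempty A with hA | ⟨⟨a₀⟩⟩
    · exact ⟨0, 0, 0, 0, Or.inl monotone_const, fun a => hA.elim a⟩
    by_cases hconst : ∀ a x y, u a x - u a₀ x = u a y - u a₀ y
    · rcases isEmpty_or_nonempty Θ with hΘ | ⟨⟨θ₀⟩⟩
      · exact ⟨0, 0, 0, 0, Or.inl monotone_const, fun a θ => hΘ.elim θ⟩
      refine ⟨0, fun a => u a θ₀ - u a₀ θ₀, 0, u a₀, Or.inl monotone_const, fun a θ => ?_⟩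
      have := hconst a θ θ₀
      simp only [Pi.zero_apply]
      linarith
    · push Not at hconst
      obtain ⟨a, x, y, hxy⟩ := hconst
      obtain ⟨l, hlx, hly⟩ := hlb x y
      obtain ⟨h, hxh, hyh⟩ := hub x y
      have hne : u a l - u a₀ l ≠ u a h - u a₀ h := by
        intro hE
        have h1 := eq_of_mono_or_anti (hmd a a₀) hlx hxh hE
        have h2 := eq_of_mono_or_anti (hmd a a₀) hly hyh hE
        exact hxy (h1.trans h2.symm)
      have key : ∀ b, ∃ s t : ℝ, ∀ θ,
          u b θ - u a₀ θ = s * (u a θ - u a₀ θ) + t := fun b =>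
        ⟨_, _, eq_of_comb_mono hub hlb (f := fun θ => u a θ - u a₀ θ)
          (g := fun θ => u b θ - u a₀ θ) (hmd a a₀) (fun c => by
            obtain ⟨p, q, k, hk⟩ := exists_comb_eq_diff hconv a₀ a b c
            simpa [hk] using mono_or_anti_const_mul (hmd p q) k 0) (hlx.trans hxh) hne⟩
      choose s t hst using key
      refine ⟨s, t, fun θ => u a θ - u a₀ θ, u a₀, hmd a a₀, fun b θ => ?_⟩
      have := hst b θ
      linarith
  · rintro ⟨g₁, g₂, f₁, h, hf, hu⟩ a a'
    have hE : (fun θ => u a θ - u a' θ) =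
        fun θ => (g₁ a - g₁ a') * f₁ θ + (g₂ a - g₂ a') := by
      funext θ
      rw [hu, hu]
      ring
    rw [hE]
    exact mono_or_anti_const_mul hf _ _
end

section
/- Let Θ be a partially ordered set in which every pair of elements has an upper bound and a lower bound in Θ, and let f₁, f₂ : Θ → ℝ be monotone functions. Then the linear combination θ ↦ α₁·f₁(θ) + α₂·f₂(θ) is monotone for every (α₁, α₂) ∈ ℝ² if and only if one of f₁, f₂ is an affine transformation of the other, i.e., there exists (λ₁, λ₂) ∈ ℝ² such that either f₂(θ) = λ₁·f₁(θ) + λ₂ for all θ, or f₁(θ) = λ₁·f₂(θ) + λ₂ for all θ. -/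
lemma monotone_or_antitone_affine {Θ : Type*} [PartialOrder Θ] {f g : Θ → ℝ}
    (hf : Monotone f ∨ Antitone f) (c d : ℝ) (hg : ∀ θ, g θ = c * f θ + d) :
    Monotone g ∨ Antitone g := by
  rcases le_total 0 c with hc | hc <;> rcases hf with hf | hf
  · left; intro x y h; rw [hg, hg]; nlinarith [mul_le_mul_of_nonneg_left (hf h) hc]
  · right; intro x y h; rw [hg, hg]; nlinarith [mul_le_mul_of_nonneg_left (hf h) hc]
  · right; intro x y h; rw [hg, hg]; nlinarith [mul_le_mul_of_nonpos_left (hf h) hc]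
  · left; intro x y h; rw [hg, hg]; nlinarith [mul_le_mul_of_nonpos_left (hf h) hc]

lemma eq_left_of_mem_Icc {Θ : Type*} [PartialOrder Θ] {f : Θ → ℝ}
    (hf : Monotone f ∨ Antitone f) {k x h : Θ} (hkx : k ≤ x) (hxh : x ≤ h)
    (hkh : f k = f h) : f x = f k := by
  rcases hf with hf | hf
  · linarith [hf hkx, hf hxh]
  · linarith [hf hkx, hf hxh]

/-- For `x` in the order interval `[k, h]`, the point `(f₁ x, f₂ x)` is collinear with those at `k`
and `h`: the linear combination vanishing on the increment from `k` to `h` is monotone, hence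
constant on `[k, h]`. -/
lemma cross_eq_of_mem_Icc {Θ : Type*} [PartialOrder Θ] {f₁ f₂ : Θ → ℝ}
    (H : ∀ α₁ α₂ : ℝ, Monotone (fun θ => α₁ * f₁ θ + α₂ * f₂ θ) ∨
      Antitone (fun θ => α₁ * f₁ θ + α₂ * f₂ θ))
    {k x h : Θ} (hkx : k ≤ x) (hxh : x ≤ h) :
    (f₁ h - f₁ k) * (f₂ x - f₂ k) = (f₂ h - f₂ k) * (f₁ x - f₁ k) := by
  have := eq_left_of_mem_Icc (H (-(f₂ h - f₂ k)) (f₁ h - f₁ k)) hkx hxh (by ring)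
  linarith

/-- For monotone `f₁, f₂`, all linear combinations are monotone
iff one of them is an affine transformation of the other. -/
theorem linComb_monotone_iff_affine {Θ : Type*} [PartialOrder Θ]
    (hub : ∀ θ₁ θ₂ : Θ, ∃ θ : Θ, θ₁ ≤ θ ∧ θ₂ ≤ θ)
    (hlb : ∀ θ₁ θ₂ : Θ, ∃ θ : Θ, θ ≤ θ₁ ∧ θ ≤ θ₂)
    (f₁ f₂ : Θ → ℝ)
    (hf₁ : Monotone f₁ ∨ Antitone f₁) (hf₂ : Monotone f₂ ∨ Antitone f₂) :
    (∀ α₁ α₂ : ℝ,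
      Monotone (fun θ => α₁ * f₁ θ + α₂ * f₂ θ) ∨
        Antitone (fun θ => α₁ * f₁ θ + α₂ * f₂ θ)) ↔
      ∃ lam₁ lam₂ : ℝ,
        (∀ θ, f₂ θ = lam₁ * f₁ θ + lam₂) ∨ (∀ θ, f₁ θ = lam₁ * f₂ θ + lam₂) := by
  constructor
  · intro H
    by_cases hc : ∀ a b, f₁ a = f₁ b
    · rcases isEmpty_or_nonempty Θ with hE | ⟨⟨a⟩⟩
      · exact ⟨0, 0, Or.inl fun θ => hE.elim θ⟩
      · exact ⟨0, f₁ a, Or.inr fun θ => by rw [hc θ a]; ring⟩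
    · push Not at hc
      obtain ⟨a, b, hab⟩ := hc
      obtain ⟨u, hau, hbu⟩ := hub a b
      obtain ⟨l, hla, hlb'⟩ := hlb a b
      have hlu : f₁ l ≠ f₁ u := fun e => hab <|
        (eq_left_of_mem_Icc hf₁ hla hau e).trans (eq_left_of_mem_Icc hf₁ hlb' hbu e).symm
      have hne : f₁ u - f₁ l ≠ 0 := sub_ne_zero.mpr hlu.symm
      refine ⟨(f₂ u - f₂ l) / (f₁ u - f₁ l),
        f₂ l - (f₂ u - f₂ l) / (f₁ u - f₁ l) * f₁ l, Or.inl fun θ => ?_⟩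
      obtain ⟨h, huh, hθh⟩ := hub u θ
      obtain ⟨k, hkl, hkθ⟩ := hlb l θ
      have lu : l ≤ u := hla.trans hau
      have hkh : f₁ h - f₁ k ≠ 0 := fun e => by
        have e' : f₁ k = f₁ h := by linarith
        exact hlu ((eq_left_of_mem_Icc hf₁ hkl (lu.trans huh) e').trans
          (eq_left_of_mem_Icc hf₁ (hkl.trans lu) huh e').symm)
      have e₁ := cross_eq_of_mem_Icc H hkl (lu.trans huh)
      have e₂ := cross_eq_of_mem_Icc H (hkl.trans lu) huh
      have e₃ := cross_eq_of_mem_Icc H hkθ hθh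
      have key : (f₂ θ - f₂ l) * (f₁ u - f₁ l) = (f₂ u - f₂ l) * (f₁ θ - f₁ l) := by
        apply mul_left_cancel₀ hkh
        linear_combination (f₁ u - f₁ l) * (e₃ - e₁) - (f₁ θ - f₁ l) * (e₂ - e₁)
      field_simp
      linarith
  · rintro ⟨c, d, h | h⟩ α₁ α₂
    · exact monotone_or_antitone_affine hf₁ (α₁ + α₂ * c) (α₂ * d)
        fun θ => by rw [h θ]; ring
    · exact monotone_or_antitone_affine hf₂ (α₁ * c + α₂) (α₁ * d)
        fun θ => by rw [h θ]; ring
end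

section
/- Let Θ be a partially ordered set in which every pair of elements has an upper bound and a lower bound in Θ, let Z be a nonempty set, and let f : Z × Θ → ℝ. Then f is linear combinations monotonicity-preserving if and only if there exist z' ∈ Z and functions λ₁, λ₂ : Z → ℝ such that (1) f(z', ·) : Θ → ℝ is monotone, and (2) for all z ∈ Z and θ ∈ Θ, f(z, θ) = λ₁(z)·f(z', θ) + λ₂(z). -/
lemma finsum_single_add_single_mul {Z : Type*} [DecidableEq Z] (a b : Z) (α β : ℝ) (g : Z → ℝ) :
    ∑ᶠ w, (Pi.single a α + Pi.single b β : Z → ℝ) w * g w = α * g a + β * g b := by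
  have key : ∀ (c : Z) (γ : ℝ), ∑ᶠ w, (Pi.single c γ : Z → ℝ) w * g w = γ * g c := by
    intro c γ
    rw [finsum_eq_single _ c]
    · simp
    · intro w hw
      simp [hw]
  have fin : ∀ (c : Z) (γ : ℝ),
      (Function.support fun w => (Pi.single c γ : Z → ℝ) w * g w).Finite := by
    intro c γ
    refine (Set.finite_singleton c).subset fun w hw => ?_
    by_contra hne
    exact hw (by simp [show w ≠ c from hne])
  simp only [Pi.add_apply, add_mul]
  rw [finsum_add_distrib (fin a α) (fin b β), key, key]

lemma LinCombMonPreserving.pair {Z Θ : Type*} [PartialOrder Θ] {f : Z → Θ → ℝ}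
    (hf : LinCombMonPreserving f) (a b : Z) (α β : ℝ) :
    Monotone (fun θ => α * f a θ + β * f b θ) ∨ Antitone (fun θ => α * f a θ + β * f b θ) := by
  classical
  have h := hf (Pi.single a α + Pi.single b β) (by
    refine ((Set.finite_singleton a).union (Set.finite_singleton b)).subset fun w hw => ?_
    by_contra hne
    simp only [Set.mem_union, Set.mem_singleton_iff, not_or] at hne
    exact hw (by simp [hne.1, hne.2]))
  simpa only [finsum_single_add_single_mul] using h

/-- Increments of two of the functions over two comparable pairs have vanishing determinant. -/
lemma LinCombMonPreserving.increments_proportional {Z Θ : Type*} [PartialOrder Θ]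
    {f : Z → Θ → ℝ} (hf : LinCombMonPreserving f) (a b : Z) {s t p q : Θ}
    (hst : s ≤ t) (hpq : p ≤ q) :
    (f a t - f a s) * (f b q - f b p) = (f a q - f a p) * (f b t - f b s) := by
  -- With these coefficients the two increments of the combination are `d` and `-d`,
  -- where `d` is the determinant in question; monotonicity then forces `d = 0`.
  rcases hf.pair a b ((f b q - f b p) + (f b t - f b s))
    (-((f a q - f a p) + (f a t - f a s))) with h | h
  · have h1 := h hst
    have h2 := h hpq
    simp only at h1 h2
    linarith
  · have h1 := h hst
    have h2 := h hpq
    simp only at h1 h2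
    linarith

/-- `f` is linear combinations monotonicity-preserving iff it is
affinely generated by a single monotone function. -/
theorem linCombMonPreserving_iff {Θ Z : Type*} [PartialOrder Θ] [Nonempty Z]
    (hub : ∀ θ₁ θ₂ : Θ, ∃ θ : Θ, θ₁ ≤ θ ∧ θ₂ ≤ θ)
    (hlb : ∀ θ₁ θ₂ : Θ, ∃ θ : Θ, θ ≤ θ₁ ∧ θ ≤ θ₂)
    (f : Z → Θ → ℝ) :
    LinCombMonPreserving f ↔
      ∃ (z' : Z) (lam₁ lam₂ : Z → ℝ),
        (Monotone (f z') ∨ Antitone (f z')) ∧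
        (∀ (z : Z) (θ : Θ), f z θ = lam₁ z * f z' θ + lam₂ z) := by
  constructor
  · intro hf
    by_cases hc : ∃ z' s t, s ≤ t ∧ f z' s ≠ f z' t
    · obtain ⟨z', s, t, hst, hne⟩ := hc
      have hD : f z' t - f z' s ≠ 0 := sub_ne_zero.mpr hne.symm
      refine ⟨z', fun z => (f z t - f z s) / (f z' t - f z' s),
        fun z => f z s - (f z t - f z s) / (f z' t - f z' s) * f z' s, ?_, ?_⟩
      · simpa using hf.pair z' z' 1 0
      · intro z θ
        obtain ⟨u, hθu, hsu⟩ := hub θ s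
        have h1 := hf.increments_proportional z' z hst hθu
        have h2 := hf.increments_proportional z' z hst hsu
        field_simp
        linear_combination h2 - h1
    · push Not at hc
      obtain ⟨z'⟩ := ‹Nonempty Z›
      have hconst : ∀ z s t, f z s = f z t := by
        intro z s t
        obtain ⟨u, hsu, htu⟩ := hub s t
        rw [hc z s u hsu, hc z t u htu]
      -- `lam₂ z` is the value of the constant function `f z`; `Θ` may be empty.
      by_cases hΘ : Nonempty Θ
      · obtain ⟨θ₀⟩ := hΘ
        exact ⟨z', fun _ => 0, fun z => f z θ₀, Or.inl fun s t _ => (hconst z' s t).le,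
          fun z θ => by simpa using hconst z θ θ₀⟩
      · exact ⟨z', fun _ => 0, fun _ => 0, Or.inl fun s t _ => (hconst z' s t).le,
          fun z θ => (hΘ ⟨θ⟩).elim⟩
  · rintro ⟨z', lam₁, lam₂, hmon, haff⟩ μ hμ
    have hsum : ∀ θ, ∑ᶠ z, μ z * f z θ
        = (∑ᶠ z, μ z * lam₁ z) * f z' θ + ∑ᶠ z, μ z * lam₂ z := by
      intro θ
      have fin : ∀ g : Z → ℝ, (Function.support fun z => μ z * g z).Finite := fun g =>
        hμ.subset fun z hz hz0 => hz (by simp [hz0])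
      rw [finsum_mul, ← finsum_add_distrib _ (fin lam₂)]
      · refine finsum_congr fun z => ?_
        rw [haff z θ]
        ring
      · simpa only [mul_assoc, Function.HasFiniteSupport] using fin fun z => lam₁ z * f z' θ
    simp only [hsum]
    generalize (∑ᶠ z, μ z * lam₁ z) = A
    generalize (∑ᶠ z, μ z * lam₂ z) = B
    rcases le_total 0 A with hA | hA <;> rcases hmon with h | h
    · exact Or.inl ((h.const_mul hA).add_const B)
    · exact Or.inr ((h.const_mul hA).add_const B)
    · exact Or.inr fun s t hst => by
        simpa using mul_le_mul_of_nonpos_left (h hst) hA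
    · exact Or.inl fun s t hst => by
        simpa using mul_le_mul_of_nonpos_left (h hst) hA
end

section
/- Let Θ be a partially ordered set in which every pair of elements has an upper bound and a lower bound in Θ, let (A, ⪰) be a partially ordered set, and let u : A × Θ → ℝ be such that A is minimal with respect to u (for all distinct a, a' ∈ A there is θ with u(a,θ) ≠ u(a',θ)). Then u has monotone comparative statics on (A, ⪰) if and only if u has single-crossing differences (SCD) and ⪰ is a refinement of ⪰_SCD. -/
/-- `S` dominates `S'` in the strong set order: for every `a ∈ S`, `a' ∈ S'`,
the join and meet of `{a, a'}` exist, with the join in `S` and the meet in `S'`. -/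
def StrongSetOrder {A : Type*} [PartialOrder A] (S S' : Set A) : Prop :=
  ∀ a ∈ S, ∀ a' ∈ S',
    (∃ j : A, IsLUB {a, a'} j ∧ j ∈ S) ∧ (∃ m : A, IsGLB {a, a'} m ∧ m ∈ S')

/-- `u` has monotone comparative statics on the ordered set `A`. -/
def MCS {A Θ : Type*} [PartialOrder A] [PartialOrder Θ] (u : A → Θ → ℝ) : Prop :=
  ∀ (S : Set A) (θl θh : Θ), θl ≤ θh →
    StrongSetOrder (choiceCorr u S θh) (choiceCorr u S θl)

/-- `a ≻_SCD a'`: the difference is single crossing only from below. -/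
def SCDgt {A Θ : Type*} [PartialOrder Θ] (u : A → Θ → ℝ) (a a' : A) : Prop :=
  Monotone (fun θ => Real.sign (u a θ - u a' θ)) ∧
  ¬ Antitone (fun θ => Real.sign (u a θ - u a' θ))

/-- `a ⪰_SCD a'`. -/
def SCDge {A Θ : Type*} [PartialOrder Θ] (u : A → Θ → ℝ) (a a' : A) : Prop :=
  SCDgt u a a' ∨ a = a'

/-- Monotonicity of the sign as preservation of nonnegativity and of positivity. -/
lemma monotone_sign_iff {Θ : Type*} [PartialOrder Θ] (f : Θ → ℝ) :
    Monotone (fun θ => Real.sign (f θ)) ↔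
      ∀ θl θh, θl ≤ θh → (0 ≤ f θl → 0 ≤ f θh) ∧ (0 < f θl → 0 < f θh) := by
  have key : ∀ x y : ℝ, Real.sign x ≤ Real.sign y ↔ (0 ≤ x → 0 ≤ y) ∧ (0 < x → 0 < y) := by
    intro x y
    rcases lt_trichotomy x 0 with hx | hx | hx <;> rcases lt_trichotomy y 0 with hy | hy | hy <;>
      simp [hx, hy, Real.sign_of_neg, Real.sign_of_pos] <;> grind
  exact ⟨fun h θl θh hle => (key _ _).1 (h hle), fun h θl θh hle => (key _ _).2 (h θl θh hle)⟩

/-- Exchanging the two actions turns crossing from above into crossing from below. -/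
lemma antitone_sign_sub_iff {Θ : Type*} [PartialOrder Θ] (f g : Θ → ℝ) :
    Antitone (fun θ => Real.sign (f θ - g θ)) ↔ Monotone (fun θ => Real.sign (g θ - f θ)) := by
  have h : (fun θ => Real.sign (g θ - f θ)) = fun θ => -Real.sign (f θ - g θ) := by
    funext θ
    rw [← Real.sign_neg, neg_sub]
  rw [h]
  exact ⟨fun h => h.neg, fun h => by simpa using h.neg⟩

lemma isLUB_pair_of_le {A : Type*} [PartialOrder A] {x y : A} (h : x ≤ y) : IsLUB {x, y} y :=
  IsGreatest.isLUB ⟨by simp, by simp [upperBounds, h]⟩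

lemma isGLB_pair_of_le {A : Type*} [PartialOrder A] {x y : A} (h : x ≤ y) : IsGLB {x, y} x :=
  IsLeast.isGLB ⟨by simp, by simp [lowerBounds, h]⟩

lemma left_mem_choiceCorr_pair {A Θ : Type*} {u : A → Θ → ℝ} {a a' : A} {θ : Θ} :
    a ∈ choiceCorr u {a, a'} θ ↔ u a' θ ≤ u a θ := by
  simp [choiceCorr]

lemma right_mem_choiceCorr_pair {A Θ : Type*} {u : A → Θ → ℝ} {a a' : A} {θ : Θ} :
    a' ∈ choiceCorr u {a, a'} θ ↔ u a θ ≤ u a' θ := by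
  simp [choiceCorr]

/-- Incomparable actions are never optimal in their pair at two ordered parameters, one at each,
since their join would lie in the pair; so an optimal action is strictly optimal from there on. -/
lemma MCS.monotone_sign_of_incomparable {Θ A : Type*} [PartialOrder Θ] [PartialOrder A]
    {u : A → Θ → ℝ} (h : MCS u) {a a' : A} (h₁ : ¬ a' ≤ a) (h₂ : ¬ a ≤ a') :
    Monotone (fun θ => Real.sign (u a θ - u a' θ)) := by
  rw [monotone_sign_iff]
  intro θl θh hθ
  simp only [sub_nonneg, sub_pos]
  have strict : u a' θl ≤ u a θl → u a' θh < u a θh := by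
    intro hl
    by_contra hh
    obtain ⟨⟨j, hj, hjC⟩, -⟩ := h {a, a'} θl θh hθ a'
      (right_mem_choiceCorr_pair.2 (not_lt.1 hh)) a (left_mem_choiceCorr_pair.2 hl)
    have hja' : a' ≤ j := hj.1 (by simp)
    have hja : a ≤ j := hj.1 (by simp)
    rcases hjC.1 with rfl | rfl
    · exact h₁ hja'
    · exact h₂ hja
  exact ⟨fun hl => (strict hl).le, fun hl => strict hl.le⟩

/-- If the larger of two actions is optimal in the pair at `θl`, it stays so at any `θh ≥ θl`,
and a strict preference for it stays strict. -/
lemma MCS.monotone_sign {Θ A : Type*} [PartialOrder Θ] [PartialOrder A] {u : A → Θ → ℝ}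
    (h : MCS u) {a a' : A} (hle : a' ≤ a) :
    Monotone (fun θ => Real.sign (u a θ - u a' θ)) := by
  rw [monotone_sign_iff]
  intro θl θh hθ
  simp only [sub_nonneg, sub_pos]
  -- If `a'` is optimal at `θh` and `a` at `θl`, the strong set order makes each optimal at the
  -- other parameter too, so both are indifferent there.
  have swap : u a' θl ≤ u a θl → u a θh ≤ u a' θh → u a' θh ≤ u a θh ∧ u a θl ≤ u a' θl := by
    intro hl hh
    obtain ⟨⟨j, hj, hjC⟩, ⟨m, hm, hmC⟩⟩ := h {a, a'} θl θh hθ a'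
      (right_mem_choiceCorr_pair.2 hh) a (left_mem_choiceCorr_pair.2 hl)
    obtain rfl : j = a := hj.unique (isLUB_pair_of_le hle)
    obtain rfl : m = a' := hm.unique (isGLB_pair_of_le hle)
    exact ⟨left_mem_choiceCorr_pair.1 hjC, right_mem_choiceCorr_pair.1 hmC⟩
  refine ⟨fun hl => ?_, fun hl => ?_⟩
  · by_contra hh
    exact hh (swap hl (not_le.1 hh).le).1
  · by_contra hh
    exact absurd (swap hl.le (not_lt.1 hh)).2 (not_le.2 hl)

/-- With `A` minimal, `u` has MCS on `(A, ⪰)` iff `u` has SCD and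
`⪰` refines `⪰_SCD`. -/
theorem mcs_iff_scd_and_refinement {Θ A : Type*} [PartialOrder Θ] [PartialOrder A]
    (hub : ∀ θ₁ θ₂ : Θ, ∃ θ : Θ, θ₁ ≤ θ ∧ θ₂ ≤ θ)
    (hlb : ∀ θ₁ θ₂ : Θ, ∃ θ : Θ, θ ≤ θ₁ ∧ θ ≤ θ₂)
    (u : A → Θ → ℝ) (hminimal : MinimalActions u) :
    MCS u ↔ (SCD u ∧ ∀ a a' : A, SCDge u a a' → a' ≤ a) := by
  constructor
  · intro h
    have below : ∀ a a' : A, ¬ a ≤ a' → Monotone (fun θ => Real.sign (u a θ - u a' θ)) := by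
      intro a a' hna
      by_cases hle : a' ≤ a
      · exact h.monotone_sign hle
      · exact h.monotone_sign_of_incomparable hle hna
    refine ⟨fun a a' => ?_, fun a a' hge => ?_⟩
    · by_cases hle : a ≤ a'
      · exact Or.inr ((antitone_sign_sub_iff _ _).2 (h.monotone_sign hle))
      · exact Or.inl (below a a' hle)
    · rcases hge with ⟨-, hnot⟩ | rfl
      · by_contra hle
        exact hnot ((antitone_sign_sub_iff _ _).2 (below a' a hle))
      · exact le_rfl
  · rintro ⟨hscd, href⟩ S θl θh hθ a ha a' ha'
    have hh : u a' θh ≤ u a θh := ha.2 a' ha'.1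
    have hl : u a θl ≤ u a' θl := ha'.2 a ha.1
    by_cases hmono : Monotone (fun θ => Real.sign (u a θ - u a' θ))
    · by_cases hmono' : Monotone (fun θ => Real.sign (u a' θ - u a θ))
      -- Here the sign is constant, and `D a a' θl ≤ 0 ≤ D a a' θh`, so `D a a'` vanishes.
      · have heq : a = a' := by
          by_contra hne
          obtain ⟨θ, hθne⟩ := hminimal a a' hne
          rw [monotone_sign_iff] at hmono hmono'
          simp only [sub_nonneg, sub_pos] at hmono hmono'
          rcases lt_or_gt_of_ne hθne with hlt | hgt
          · obtain ⟨t, ht, hht⟩ := hub θ θh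
            exact absurd ((hmono θh t hht).1 hh) (not_le.2 ((hmono' θ t ht).2 hlt))
          · obtain ⟨t, ht, hlt⟩ := hub θ θl
            exact absurd ((hmono' θl t hlt).1 hl) (not_le.2 ((hmono θ t ht).2 hgt))
        subst heq
        exact ⟨⟨a, isLUB_pair_of_le le_rfl, ha⟩, ⟨a, isGLB_pair_of_le le_rfl, ha'⟩⟩
      · have hle : a' ≤ a :=
          href a a' (Or.inl ⟨hmono, fun hanti => hmono' ((antitone_sign_sub_iff _ _).1 hanti)⟩)
        exact ⟨⟨a, Set.pair_comm a' a ▸ isLUB_pair_of_le hle, ha⟩,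
          ⟨a', Set.pair_comm a' a ▸ isGLB_pair_of_le hle, ha'⟩⟩
    · have hanti := (hscd a a').resolve_left hmono
      have hmono' := (antitone_sign_sub_iff _ _).1 hanti
      have hle : a ≤ a' :=
        href a' a (Or.inl ⟨hmono', fun hanti' => hmono ((antitone_sign_sub_iff _ _).1 hanti')⟩)
      -- `D a a'` is decreasing in sign yet `≤ 0` at `θl` and `≥ 0` at `θh`, so both are zeros.
      rw [monotone_sign_iff] at hmono'
      simp only [sub_nonneg, sub_pos] at hmono'
      have eqh : u a θh ≤ u a' θh := (hmono' θl θh hθ).1 hl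
      have eql : u a' θl ≤ u a θl := by
        by_contra hlt
        exact absurd ((hmono' θl θh hθ).2 (not_le.1 hlt)) (not_lt.2 hh)
      exact ⟨⟨a', isLUB_pair_of_le hle, ha'.1, fun b hb => (ha.2 b hb).trans eqh⟩,
        ⟨a, isGLB_pair_of_le hle, ha.1, fun b hb => (ha'.2 b hb).trans eql⟩⟩
end

section
/- Let Θ be a partially ordered set in which every pair of elements has an upper bound and a lower bound in Θ, let (A, ⪰) be a partially ordered set, and let u : A × Θ → ℝ be such that A is minimal with respect to u (for all distinct a, a' ∈ A there is θ with u(a,θ) ≠ u(a',θ)). Then u has monotone selection on (A, ⪰) — i.e., for every S ⊆ A, all θ_l < θ_h in Θ, every a_l ∈ C_u(S, θ_l) and every a_h ∈ C_u(S, θ_h), one has a_h ⪰ a_l (equivalently, every selection from θ ↦ C_u(S, θ) is increasing) — if and only if u has strict single-crossing differences (SSCD) and ⪰ is a refinement of ⪰_SSCD. -/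
/-- `u` has monotone selection on the ordered set `A`. -/
def MonotoneSelection {A Θ : Type*} [PartialOrder A] [PartialOrder Θ]
    (u : A → Θ → ℝ) : Prop :=
  ∀ (S : Set A) (θl θh : Θ), θl < θh →
    ∀ al ∈ choiceCorr u S θl, ∀ ah ∈ choiceCorr u S θh, al ≤ ah

/-- `a ≻_SSCD a'`: the difference is strictly single crossing, single crossing
from below, and not single crossing from above. -/
def SSCDgt {A Θ : Type*} [PartialOrder Θ] (u : A → Θ → ℝ) (a a' : A) : Prop :=
  StrictSingleCrossing (fun θ => u a θ - u a' θ) ∧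
  Monotone (fun θ => Real.sign (u a θ - u a' θ)) ∧
  ¬ Antitone (fun θ => Real.sign (u a θ - u a' θ))

/-- `a ⪰_SSCD a'`. -/
def SSCDge {A Θ : Type*} [PartialOrder Θ] (u : A → Θ → ℝ) (a a' : A) : Prop :=
  SSCDgt u a a' ∨ a = a'

theorem real_sign_le_iff {x y : ℝ} :
    Real.sign x ≤ Real.sign y ↔ (0 < x → 0 < y) ∧ (0 ≤ x → 0 ≤ y) := by
  unfold Real.sign
  split_ifs <;> constructor <;> intro h <;> first | (norm_num at h; done) | skip
  all_goals first | (norm_num; done) | grind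

/-- Monotone selection applied to the menu `{a, b}`. -/
theorem MonotoneSelection.le_of_pair {A Θ : Type*} [PartialOrder A] [PartialOrder Θ]
    {u : A → Θ → ℝ} (h : MonotoneSelection u) {a b : A} {θl θh : Θ} (hθ : θl < θh)
    (hl : u b θl ≤ u a θl) (hh : u a θh ≤ u b θh) : a ≤ b := by
  refine h {a, b} θl θh hθ a ⟨by simp, ?_⟩ b ⟨by simp, ?_⟩
  · rintro c (rfl | rfl)
    exacts [le_rfl, hl]
  · rintro c (rfl | rfl)
    exacts [hh, le_rfl]

theorem sign_mono_of_pos_above {Θ : Type*} [PartialOrder Θ] {f : Θ → ℝ}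
    (hf : ∀ θl θh, θl < θh → 0 ≤ f θl → 0 < f θh) : Monotone (fun θ => Real.sign (f θ)) := by
  intro x y hxy
  rcases hxy.eq_or_lt with rfl | hlt
  · exact le_rfl
  · exact real_sign_le_iff.2 ⟨fun h => hf x y hlt h.le, fun h => (hf x y hlt h).le⟩

theorem sign_anti_of_neg_above {Θ : Type*} [PartialOrder Θ] {f : Θ → ℝ}
    (hf : ∀ θl θh, θl < θh → f θl ≤ 0 → f θh < 0) : Antitone (fun θ => Real.sign (f θ)) := by
  intro x y hxy
  rcases hxy.eq_or_lt with rfl | hlt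
  · exact le_rfl
  · refine real_sign_le_iff.2 ⟨fun h => ?_, fun h => ?_⟩ <;> by_contra hc <;>
      linarith [hf x y hlt (by linarith)]

/-- With `A` minimal, `u` has monotone selection on `(A, ⪰)` iff
`u` has SSCD and `⪰` refines `⪰_SSCD`. -/
theorem monotoneSelection_iff_sscd_and_refinement {Θ A : Type*}
    [PartialOrder Θ] [PartialOrder A]
    (hub : ∀ θ₁ θ₂ : Θ, ∃ θ : Θ, θ₁ ≤ θ ∧ θ₂ ≤ θ)
    (hlb : ∀ θ₁ θ₂ : Θ, ∃ θ : Θ, θ ≤ θ₁ ∧ θ ≤ θ₂)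
    (u : A → Θ → ℝ) (hminimal : MinimalActions u) :
    MonotoneSelection u ↔ (SSCD u ∧ ∀ a a' : A, SSCDge u a a' → a' ≤ a) := by
  constructor
  · intro hms
    refine ⟨fun a a' hne => ?_, fun a a' hge => ?_⟩
    · by_cases hle : a ≤ a'
      · have hn : ¬ a' ≤ a := fun h => hne (le_antisymm hle h)
        have key : ∀ θl θh, θl < θh → u a θl - u a' θl ≤ 0 → u a θh - u a' θh < 0 := by
          intro θl θh hlt h
          by_contra hc
          exact hn (hms.le_of_pair hlt (by linarith) (by linarith))
        exact ⟨Or.inr (sign_anti_of_neg_above key),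
          fun x y hxy h => (key x y hxy h.1.le).ne h.2⟩
      · have key : ∀ θl θh, θl < θh → 0 ≤ u a θl - u a' θl → 0 < u a θh - u a' θh := by
          intro θl θh hlt h
          by_contra hc
          exact hle (hms.le_of_pair hlt (by linarith) (by linarith))
        exact ⟨Or.inl (sign_mono_of_pos_above key),
          fun x y hxy h => (key x y hxy h.1.ge).ne' h.2⟩
    · rcases hge with ⟨-, -, hanti⟩ | rfl
      · by_contra hn
        -- Without `a' ≤ a`, the difference stays negative once nonpositive.
        refine hanti (sign_anti_of_neg_above fun θl θh hlt h => ?_)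
        by_contra hc
        exact hn (hms.le_of_pair hlt (by linarith) (by linarith))
      · exact le_rfl
  · rintro ⟨hs, href⟩ S θl θh hlt al ⟨halS, hal⟩ ah ⟨hahS, hah⟩
    by_cases heq : ah = al
    · exact heq.ge
    have hssc := hs ah al heq
    have hl : u ah θl - u al θl ≤ 0 := by linarith [hal ah hahS]
    have hh : 0 ≤ u ah θh - u al θh := by linarith [hah al halS]
    have hanti : ¬ Antitone (fun θ => Real.sign (u ah θ - u al θ)) := by
      intro hanti
      obtain ⟨h1, h2⟩ := real_sign_le_iff.1 (hanti hlt.le)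
      refine hssc.2 θl θh hlt ⟨le_antisymm hl (h2 hh), le_antisymm ?_ hh⟩
      by_contra hc
      linarith [h1 (not_le.1 hc)]
    exact href ah al (Or.inl ⟨hssc, hssc.1.resolve_right hanti, hanti⟩)
end

section
/- Let Θ be a partially ordered set in which every pair of elements has an upper bound and a lower bound in Θ, and let f₁, f₂ : Θ → ℝ. Then the linear combination θ ↦ α₁·f₁(θ) + α₂·f₂(θ) is strictly single crossing for every (α₁, α₂) ∈ ℝ² \ {(0,0)} if and only if f₁ and f₂ are strictly ratio ordered. -/
lemma real_sign_le_sign_iff (a b : ℝ) :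
    Real.sign a ≤ Real.sign b ↔ (0 < a → 0 < b) ∧ (0 ≤ a → 0 ≤ b) := by
  rcases lt_trichotomy a 0 with ha | ha | ha <;> rcases lt_trichotomy b 0 with hb | hb | hb <;>
    simp only [Real.sign_of_neg, Real.sign_of_pos, Real.sign_zero, ha, hb] <;> grind

/-- On a poset with two-sided bounds, a function without ordered zeros whose weak sign at two
ends of a chain becomes strict in between is single crossing. -/
lemma singleCrossing_of_between {Θ : Type*} [PartialOrder Θ]
    (hub : ∀ θ₁ θ₂ : Θ, ∃ θ : Θ, θ₁ ≤ θ ∧ θ₂ ≤ θ)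
    (hlb : ∀ θ₁ θ₂ : Θ, ∃ θ : Θ, θ ≤ θ₁ ∧ θ ≤ θ₂) (g : Θ → ℝ)
    (hz : ∀ l h, l < h → ¬(g l = 0 ∧ g h = 0))
    (hpos : ∀ l m h, l < m → m < h → 0 ≤ g l → 0 ≤ g h → 0 < g m)
    (hneg : ∀ l m h, l < m → m < h → g l ≤ 0 → g h ≤ 0 → g m < 0) :
    SingleCrossing g := by
  by_contra hcon
  simp only [SingleCrossing, Monotone, Antitone, not_or, not_forall] at hcon
  obtain ⟨⟨a, b, hab, h1⟩, ⟨c, d, hcd, h2⟩⟩ := hcon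
  rw [real_sign_le_sign_iff] at h1 h2
  have hab' : a < b := lt_of_le_of_ne hab (by rintro rfl; exact h1 ⟨id, id⟩)
  have hcd' : c < d := lt_of_le_of_ne hcd (by rintro rfl; exact h2 ⟨id, id⟩)
  obtain ⟨p, hpa, hpc⟩ := hlb a c
  obtain ⟨q, hbq, hdq⟩ := hub b d
  have hpq : p < q := lt_of_le_of_lt hpa (lt_of_lt_of_le hab' hbq)
  have aq : a < q := lt_of_lt_of_le hab' hbq
  have cq : c < q := lt_of_lt_of_le hcd' hdq
  have pb : p < b := lt_of_le_of_lt hpa hab'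
  have pd : p < d := lt_of_le_of_lt hpc hcd'
  have zpq := hz p q hpq
  -- The sign pattern of `g` at `p` and `q` excludes a drop on `(a, b)` or a rise on `(c, d)`.
  rcases hpa.eq_or_lt with e1 | pa <;> rcases hpc.eq_or_lt with e2 | pc <;>
    rcases hbq.eq_or_lt with e3 | bq <;> rcases hdq.eq_or_lt with e4 | dq <;> grind

lemma strictSingleCrossing_of_strictRatioDominates {Θ : Type*} [PartialOrder Θ]
    (hub : ∀ θ₁ θ₂ : Θ, ∃ θ : Θ, θ₁ ≤ θ ∧ θ₂ ≤ θ)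
    (hlb : ∀ θ₁ θ₂ : Θ, ∃ θ : Θ, θ ≤ θ₁ ∧ θ ≤ θ₂) (f₁ f₂ : Θ → ℝ)
    (hD : StrictRatioDominates f₁ f₂) (α₁ α₂ : ℝ) (hα : ¬(α₁ = 0 ∧ α₂ = 0)) :
    StrictSingleCrossing (fun θ => α₁ * f₁ θ + α₂ * f₂ θ) := by
  have hz : ∀ l h : Θ, l < h →
      ¬(α₁ * f₁ l + α₂ * f₂ l = 0 ∧ α₁ * f₁ h + α₂ * f₂ h = 0) := by
    rintro l h hlh ⟨h1, h2⟩
    have hd := sub_pos.2 (hD l h hlh)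
    -- Cramer's rule: the determinant annihilates both coefficients.
    have e1 : α₁ * (f₁ h * f₂ l - f₁ l * f₂ h) = 0 := by
      linear_combination f₂ l * h2 - f₂ h * h1
    have e2 : α₂ * (f₁ h * f₂ l - f₁ l * f₂ h) = 0 := by
      linear_combination f₁ h * h1 - f₁ l * h2
    exact hα ⟨(mul_eq_zero.1 e1).resolve_right hd.ne', (mul_eq_zero.1 e2).resolve_right hd.ne'⟩
  refine ⟨singleCrossing_of_between hub hlb _ hz ?_ ?_, hz⟩
  · intro l m h hlm hmh gl gh
    have d1 := sub_pos.2 (hD l m hlm)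
    have d2 := sub_pos.2 (hD m h hmh)
    have d3 := sub_pos.2 (hD l h (hlm.trans hmh))
    have hzz := hz l h (hlm.trans hmh)
    refine pos_of_mul_pos_right (a := f₁ h * f₂ l - f₁ l * f₂ h) ?_ d3.le
    have key : (f₁ h * f₂ l - f₁ l * f₂ h) * (α₁ * f₁ m + α₂ * f₂ m) =
        (f₁ h * f₂ m - f₁ m * f₂ h) * (α₁ * f₁ l + α₂ * f₂ l) +
        (f₁ m * f₂ l - f₁ l * f₂ m) * (α₁ * f₁ h + α₂ * f₂ h) := by ring
    rw [key]
    rcases gl.eq_or_lt with e | gl'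
    · have gh' := lt_of_le_of_ne gh (fun e' => hzz ⟨e.symm, e'.symm⟩)
      exact add_pos_of_nonneg_of_pos (mul_nonneg d2.le gl) (mul_pos d1 gh')
    · exact add_pos_of_pos_of_nonneg (mul_pos d2 gl') (mul_nonneg d1.le gh)
  · intro l m h hlm hmh gl gh
    have d1 := sub_pos.2 (hD l m hlm)
    have d2 := sub_pos.2 (hD m h hmh)
    have d3 := sub_pos.2 (hD l h (hlm.trans hmh))
    have hzz := hz l h (hlm.trans hmh)
    refine neg_of_mul_neg_right (a := f₁ h * f₂ l - f₁ l * f₂ h) ?_ d3.le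
    have key : (f₁ h * f₂ l - f₁ l * f₂ h) * (α₁ * f₁ m + α₂ * f₂ m) =
        (f₁ h * f₂ m - f₁ m * f₂ h) * (α₁ * f₁ l + α₂ * f₂ l) +
        (f₁ m * f₂ l - f₁ l * f₂ m) * (α₁ * f₁ h + α₂ * f₂ h) := by ring
    rw [key]
    rcases gl.eq_or_lt with e | gl'
    · have gh' := lt_of_le_of_ne gh (fun e' => hzz ⟨e, e'⟩)
      exact add_neg_of_nonpos_of_neg (mul_nonpos_of_nonneg_of_nonpos d2.le gl)
        (mul_neg_of_pos_of_neg d1 gh')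
    · exact add_neg_of_neg_of_nonpos (mul_neg_of_pos_of_neg d2 gl')
        (mul_nonpos_of_nonneg_of_nonpos d1.le gh)

/-- A single crossing function vanishing at `x` keeps a weak sign above `x`. -/
lemma SingleCrossing.nonneg_above {Θ : Type*} [PartialOrder Θ] {g : Θ → ℝ}
    (hg : SingleCrossing g) {x y z : Θ} (hx : g x = 0) (hxy : x ≤ y) (hxz : x ≤ z)
    (hy : 0 < g y) : 0 ≤ g z := by
  rcases hg with hg | hg
  · exact ((real_sign_le_sign_iff _ _).1 (hg hxz)).2 hx.ge
  · exact absurd (((real_sign_le_sign_iff _ _).1 (hg hxy)).1 hy) hx.not_gt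

/-- A single crossing function vanishing at `x` keeps a weak sign below `x`. -/
lemma SingleCrossing.nonneg_below {Θ : Type*} [PartialOrder Θ] {g : Θ → ℝ}
    (hg : SingleCrossing g) {x y z : Θ} (hx : g x = 0) (hyx : y ≤ x) (hzx : z ≤ x)
    (hy : 0 < g y) : 0 ≤ g z := by
  rcases hg with hg | hg
  · exact absurd (((real_sign_le_sign_iff _ _).1 (hg hyx)).1 hy) hx.not_gt
  · exact ((real_sign_le_sign_iff _ _).1 (hg hzx)).2 hx.ge

lemma strictRatioOrdered_of_strictSingleCrossing {Θ : Type*} [PartialOrder Θ]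
    (hub : ∀ θ₁ θ₂ : Θ, ∃ θ : Θ, θ₁ ≤ θ ∧ θ₂ ≤ θ)
    (hlb : ∀ θ₁ θ₂ : Θ, ∃ θ : Θ, θ ≤ θ₁ ∧ θ ≤ θ₂) (f₁ f₂ : Θ → ℝ)
    (H : ∀ α₁ α₂ : ℝ, ¬(α₁ = 0 ∧ α₂ = 0) →
      StrictSingleCrossing (fun θ => α₁ * f₁ θ + α₂ * f₂ θ)) :
    StrictRatioOrdered f₁ f₂ := by
  have hne : ∀ l h : Θ, l < h → f₁ h * f₂ l - f₁ l * f₂ h ≠ 0 := by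
    intro l h hlh h0
    by_cases hl : f₂ l = 0 ∧ -f₁ l = 0
    · by_cases hh : f₂ h = 0 ∧ -f₁ h = 0
      · exact (H 1 0 (by simp)).2 l h hlh ⟨by grind, by grind⟩
      · exact (H _ _ hh).2 l h hlh ⟨by grind, by grind⟩
    · exact (H _ _ hl).2 l h hlh ⟨by grind, by grind⟩
  have hup : ∀ l h q : Θ, l < h → h ≤ q →
      (0 < f₁ h * f₂ l - f₁ l * f₂ h ↔ 0 < f₁ q * f₂ l - f₁ l * f₂ q) := by
    intro l h q hlh hhq
    have hlq := hlh.trans_le hhq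
    have hsc := (H (f₂ l) (-f₁ l) (fun e => hne l h hlh (by grind))).1
    have hl : f₂ l * f₁ l + -f₁ l * f₂ l = 0 := by ring
    constructor
    · intro hp
      have := hsc.nonneg_above (x := l) (y := h) (z := q) hl hlh.le hlq.le (by linarith)
      exact lt_of_le_of_ne (by linarith) (hne l q hlq).symm
    · intro hp
      have := hsc.nonneg_above (x := l) (y := q) (z := h) hl hlq.le hlh.le (by linarith)
      exact lt_of_le_of_ne (by linarith) (hne l h hlh).symm
  have hdn : ∀ p l h : Θ, p ≤ l → l < h →
      (0 < f₁ h * f₂ l - f₁ l * f₂ h ↔ 0 < f₁ h * f₂ p - f₁ p * f₂ h) := by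
    intro p l h hpl hlh
    have hph := hpl.trans_lt hlh
    have hsc := (H (-f₂ h) (f₁ h) (fun e => hne l h hlh (by grind))).1
    have hl : -f₂ h * f₁ h + f₁ h * f₂ h = 0 := by ring
    constructor
    · intro hp
      have := hsc.nonneg_below (x := h) (y := l) (z := p) hl hlh.le hph.le (by linarith)
      exact lt_of_le_of_ne (by linarith) (hne p h hph).symm
    · intro hp
      have := hsc.nonneg_below (x := h) (y := p) (z := l) hl hph.le hlh.le (by linarith)
      exact lt_of_le_of_ne (by linarith) (hne l h hlh).symm
  have hall : ∀ a b c d : Θ, a < b → c < d →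
      (0 < f₁ b * f₂ a - f₁ a * f₂ b ↔ 0 < f₁ d * f₂ c - f₁ c * f₂ d) := by
    intro a b c d hab hcd
    obtain ⟨p, hpa, hpc⟩ := hlb a c
    obtain ⟨q, hbq, hdq⟩ := hub b d
    rw [hup a b q hab hbq, hdn p a q hpa (hab.trans_le hbq), hup c d q hcd hdq,
      hdn p c q hpc (hcd.trans_le hdq)]
  by_cases hex : ∃ a b : Θ, a < b ∧ 0 < f₁ b * f₂ a - f₁ a * f₂ b
  · obtain ⟨a, b, hab, hp⟩ := hex
    exact Or.inl fun c d hcd => sub_pos.1 ((hall a b c d hab hcd).1 hp)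
  · refine Or.inr fun c d hcd => ?_
    have h1 : ¬ 0 < f₁ d * f₂ c - f₁ c * f₂ d := fun hp => hex ⟨c, d, hcd, hp⟩
    have h2 := lt_of_le_of_ne (not_lt.1 h1) (hne c d hcd)
    linarith

/-- All nonzero linear combinations of `f₁, f₂` are strictly
single crossing iff `f₁` and `f₂` are strictly ratio ordered. -/
theorem linComb_strictSingleCrossing_iff_strictRatioOrdered {Θ : Type*} [PartialOrder Θ]
    (hub : ∀ θ₁ θ₂ : Θ, ∃ θ : Θ, θ₁ ≤ θ ∧ θ₂ ≤ θ)
    (hlb : ∀ θ₁ θ₂ : Θ, ∃ θ : Θ, θ ≤ θ₁ ∧ θ ≤ θ₂)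
    (f₁ f₂ : Θ → ℝ) :
    (∀ α₁ α₂ : ℝ, ¬(α₁ = 0 ∧ α₂ = 0) →
      StrictSingleCrossing (fun θ => α₁ * f₁ θ + α₂ * f₂ θ)) ↔
      StrictRatioOrdered f₁ f₂ := by
  refine ⟨strictRatioOrdered_of_strictSingleCrossing hub hlb f₁ f₂, ?_⟩
  rintro (hD | hD) α₁ α₂ hα
  · exact strictSingleCrossing_of_strictRatioDominates hub hlb f₁ f₂ hD α₁ α₂ hα
  · have := strictSingleCrossing_of_strictRatioDominates hub hlb f₂ f₁ hD α₂ α₁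
      (fun h => hα h.symm)
    simpa only [add_comm] using this
end

section
/- Let Θ be a partially ordered set in which every pair of elements has an upper bound and a lower bound in Θ, let Z be a set, and let f : Z × Θ → ℝ. Assume there exist z₁, z₂ ∈ Z such that f(z₁, ·) : Θ → ℝ and f(z₂, ·) : Θ → ℝ are linearly independent (no (c₁, c₂) ∈ ℝ² \ {(0,0)} makes c₁·f(z₁,θ) + c₂·f(z₂,θ) = 0 for all θ). Then f is linear combinations SSC-preserving if and only if there exist λ₁, λ₂ : Z → ℝ such that (1) f(z₁, ·) and f(z₂, ·) are strictly ratio ordered, and (2) for every z ∈ Z and θ ∈ Θ, f(z, θ) = λ₁(z)·f(z₁, θ) + λ₂(z)·f(z₂, θ). -/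
/-- The form in which the preservation property is applied: to a combination of three sections,
which need not be distinct. -/
lemma LinCombSSCPreserving.three {Θ Z : Type*} [PartialOrder Θ] {f : Z → Θ → ℝ}
    (hf : LinCombSSCPreserving f) (z z₁ z₂ : Z) (c a b : ℝ) :
    (∀ θ, c * f z θ + a * f z₁ θ + b * f z₂ θ = 0) ∨
      StrictSingleCrossing (fun θ => c * f z θ + a * f z₁ θ + b * f z₂ θ) := by
  classical
  let μ : Z →₀ ℝ := Finsupp.single z c + Finsupp.single z₁ a + Finsupp.single z₂ b
  have key : ∀ θ, (∑ᶠ w, μ w * f w θ) = c * f z θ + a * f z₁ θ + b * f z₂ θ := by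
    intro θ
    have h1 : (∑ᶠ w, μ w * f w θ) = μ.sum (fun w r => r * f w θ) := by
      rw [Finsupp.sum]
      apply finsum_eq_sum_of_support_subset
      intro w hw
      simp only [Function.mem_support] at hw
      simpa using left_ne_zero_of_mul hw
    rw [h1]
    simp only [μ]
    rw [Finsupp.sum_add_index' (by simp) (by intros; ring),
      Finsupp.sum_add_index' (by simp) (by intros; ring)]
    simp
  have := hf μ μ.hasFiniteSupport
  simpa only [key] using this

/-- Along a chain `x, y, w` on which `g y` is a positive combination of `g x` and `g w`, the sign
of `g` has no strict interior extremum. -/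
lemma sign_chain {p q r x y w : ℝ} (hp : 0 < p) (hq : 0 < q) (hr : 0 < r)
    (h : r * y = p * w + q * x) :
    (Real.sign y < Real.sign w → Real.sign x ≤ Real.sign y) ∧
    (Real.sign w < Real.sign y → Real.sign y ≤ Real.sign x) ∧
    (Real.sign x < Real.sign y → Real.sign y ≤ Real.sign w) ∧
    (Real.sign y < Real.sign x → Real.sign w ≤ Real.sign y) := by
  have aux : ∀ t : ℝ, (t < 0 ∧ Real.sign t = -1) ∨ (t = 0 ∧ Real.sign t = 0) ∨
      (0 < t ∧ Real.sign t = 1) := by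
    intro t
    rcases lt_trichotomy t 0 with ht | ht | ht
    · exact .inl ⟨ht, Real.sign_of_neg ht⟩
    · exact .inr (.inl ⟨ht, by simp [ht]⟩)
    · exact .inr (.inr ⟨ht, Real.sign_of_pos ht⟩)
  rcases aux x with ⟨hx, sx⟩ | ⟨hx, sx⟩ | ⟨hx, sx⟩ <;>
  rcases aux y with ⟨hy, sy⟩ | ⟨hy, sy⟩ | ⟨hy, sy⟩ <;>
  rcases aux w with ⟨hw, sw⟩ | ⟨hw, sw⟩ | ⟨hw, sw⟩ <;>
  rw [sx, sy, sw] <;> norm_num <;> nlinarith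

lemma ssc_of_dominates {Θ : Type*} [PartialOrder Θ]
    (hub : ∀ θ₁ θ₂ : Θ, ∃ θ : Θ, θ₁ ≤ θ ∧ θ₂ ≤ θ)
    (hlb : ∀ θ₁ θ₂ : Θ, ∃ θ : Θ, θ ≤ θ₁ ∧ θ ≤ θ₂)
    {f₁ f₂ : Θ → ℝ} (hD : StrictRatioDominates f₁ f₂) (a b : ℝ) :
    (∀ θ, a * f₁ θ + b * f₂ θ = 0) ∨
      StrictSingleCrossing (fun θ => a * f₁ θ + b * f₂ θ) := by
  by_cases hab : a = 0 ∧ b = 0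
  · left; intro θ; simp [hab.1, hab.2]
  right
  have chain : ∀ x y w : Θ, x < y → y < w → _ := fun x y w hxy hyw =>
    sign_chain (x := a * f₁ x + b * f₂ x) (y := a * f₁ y + b * f₂ y) (w := a * f₁ w + b * f₂ w)
      (sub_pos.2 (hD x y hxy)) (sub_pos.2 (hD y w hyw)) (sub_pos.2 (hD x w (hxy.trans hyw)))
      (by ring)
  refine ⟨?_, ?_⟩
  · by_contra hcon
    simp only [SingleCrossing, Monotone, Antitone, not_or, not_forall, not_le] at hcon
    obtain ⟨⟨p, q, hpq, h1⟩, ⟨c, d, hcd, h2⟩⟩ := hcon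
    have hpq' : p < q := lt_of_le_of_ne hpq (by rintro rfl; exact lt_irrefl _ h1)
    have hcd' : c < d := lt_of_le_of_ne hcd (by rintro rfl; exact lt_irrefl _ h2)
    obtain ⟨l, hlp, hlc⟩ := hlb p c
    obtain ⟨u, hqu, hdu⟩ := hub q d
    have e1 : Real.sign (a * f₁ p + b * f₂ p) ≤ Real.sign (a * f₁ l + b * f₂ l) := by
      rcases hlp.eq_or_lt with rfl | hl
      · exact le_rfl
      · exact (chain l p q hl hpq').2.1 h1
    have e2 : Real.sign (a * f₁ u + b * f₂ u) ≤ Real.sign (a * f₁ q + b * f₂ q) := by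
      rcases hqu.eq_or_lt with rfl | hl
      · exact le_rfl
      · exact (chain p q u hpq' hl).2.2.2 h1
    have e3 : Real.sign (a * f₁ l + b * f₂ l) ≤ Real.sign (a * f₁ c + b * f₂ c) := by
      rcases hlc.eq_or_lt with rfl | hl
      · exact le_rfl
      · exact (chain l c d hl hcd').1 h2
    have e4 : Real.sign (a * f₁ d + b * f₂ d) ≤ Real.sign (a * f₁ u + b * f₂ u) := by
      rcases hdu.eq_or_lt with rfl | hl
      · exact le_rfl
      · exact (chain c d u hcd' hl).2.2.1 h2
    linarith
  · rintro x y hxy ⟨hx, hy⟩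
    -- Two zeros would make `(a, b)` orthogonal to the independent vectors `v x`, `v y`.
    have h := (sub_pos.2 (hD x y hxy)).ne'
    apply hab
    constructor
    · apply (mul_eq_zero.1 (?_ : a * (f₁ y * f₂ x - f₁ x * f₂ y) = 0)).resolve_right h
      linear_combination f₂ x * hy - f₂ y * hx
    · apply (mul_eq_zero.1 (?_ : b * (f₁ y * f₂ x - f₁ x * f₂ y) = 0)).resolve_right h
      linear_combination f₁ y * hx - f₁ x * hy

/-- If `g` vanishes at `p`, it keeps its sign along comparable points on one side of `p`. -/
lemma StrictSingleCrossing.mul_pos {Θ : Type*} [PartialOrder Θ] {g : Θ → ℝ}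
    (hg : StrictSingleCrossing g) {p x y : Θ} (hp : g p = 0)
    (hxy : x ≤ y) (hside : y < p ∨ p < x) : 0 < g x * g y := by
  have aux : ∀ s t : ℝ, Real.sign s ≤ Real.sign t → (0 < s → 0 < t) ∧ (t < 0 → s < 0) := by
    intro s t h
    constructor
    · intro hs
      by_contra! ht
      rw [Real.sign_of_pos hs] at h
      rcases ht.eq_or_lt with rfl | ht
      · norm_num at h
      · rw [Real.sign_of_neg ht] at h; norm_num at h
    · intro ht
      by_contra! hs
      rw [Real.sign_of_neg ht] at h
      rcases hs.eq_or_lt with rfl | hs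
      · norm_num at h
      · rw [Real.sign_of_pos hs] at h; norm_num at h
  have hpx : x < p ∨ p < x := hside.imp_left hxy.trans_lt
  have hpy : y < p ∨ p < y := hside.imp_right fun h => h.trans_le hxy
  have hx : g x ≠ 0 := fun h => hpx.elim (fun h' => hg.2 _ _ h' ⟨h, hp⟩)
    (fun h' => hg.2 _ _ h' ⟨hp, h⟩)
  have hy : g y ≠ 0 := fun h => hpy.elim (fun h' => hg.2 _ _ h' ⟨h, hp⟩)
    (fun h' => hg.2 _ _ h' ⟨hp, h⟩)
  rcases hg.1 with hm | hm <;> rcases hside with hs | hs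
  · have h1 := aux _ _ (hm hxy)
    have h2 := aux _ _ (hm hs.le)
    rw [hp] at h2
    have : g y < 0 := lt_of_le_of_ne (not_lt.1 fun h => lt_irrefl _ (h2.1 h)) hy
    exact mul_pos_of_neg_of_neg (h1.2 this) this
  · have h1 := aux _ _ (hm hxy)
    have h2 := aux _ _ (hm hs.le)
    rw [hp] at h2
    have : 0 < g x := lt_of_le_of_ne (not_lt.1 fun h => lt_irrefl _ (h2.2 h)) hx.symm
    exact _root_.mul_pos this (h1.1 this)
  · have h1 := aux _ _ (hm hxy)
    have h2 := aux _ _ (hm hs.le)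
    rw [hp] at h2
    have : 0 < g y := lt_of_le_of_ne (not_lt.1 fun h => lt_irrefl _ (h2.2 h)) hy.symm
    exact _root_.mul_pos (h1.1 this) this
  · have h1 := aux _ _ (hm hxy)
    have h2 := aux _ _ (hm hs.le)
    rw [hp] at h2
    have : g x < 0 := lt_of_le_of_ne (not_lt.1 fun h => lt_irrefl _ (h2.1 h)) hx
    exact mul_pos_of_neg_of_neg this (h1.2 this)

/-- Given two linearly independent sections, `f` is linear
combinations SSC-preserving iff these sections are strictly ratio ordered and
linearly generate all sections. -/
theorem linCombSSCPreserving_iff {Θ Z : Type*} [PartialOrder Θ]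
    (hub : ∀ θ₁ θ₂ : Θ, ∃ θ : Θ, θ₁ ≤ θ ∧ θ₂ ≤ θ)
    (hlb : ∀ θ₁ θ₂ : Θ, ∃ θ : Θ, θ ≤ θ₁ ∧ θ ≤ θ₂)
    (f : Z → Θ → ℝ) (z₁ z₂ : Z)
    (hindep : ∀ c₁ c₂ : ℝ, (∀ θ : Θ, c₁ * f z₁ θ + c₂ * f z₂ θ = 0) →
      c₁ = 0 ∧ c₂ = 0) :
    LinCombSSCPreserving f ↔
      ∃ lam₁ lam₂ : Z → ℝ,
        StrictRatioOrdered (f z₁) (f z₂) ∧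
        (∀ (z : Z) (θ : Θ), f z θ = lam₁ z * f z₁ θ + lam₂ z * f z₂ θ) := by
  constructor
  · intro hf
    have two : ∀ a b : ℝ, ¬(a = 0 ∧ b = 0) →
        StrictSingleCrossing (fun θ => a * f z₁ θ + b * f z₂ θ) := by
      intro a b hab
      have h := hf.three z₁ z₁ z₂ 0 a b
      simp only [zero_mul, zero_add] at h
      exact h.resolve_left fun h => hab (hindep a b h)
    -- Otherwise directedness makes `Θ` a subsingleton, on which two functions are dependent.
    obtain ⟨l₀, h₀, hlh₀⟩ : ∃ l h : Θ, l < h := by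
      by_contra! hno
      have heq : ∀ x y : Θ, x = y := by
        intro x y
        obtain ⟨u, hx, hy⟩ := hub x y
        rw [hx.eq_or_lt.resolve_right (hno x u), hy.eq_or_lt.resolve_right (hno y u)]
      by_cases hne : Nonempty Θ
      · obtain ⟨t⟩ := hne
        have h := hindep (f z₂ t) (-f z₁ t) (fun θ => by rw [heq θ t]; ring)
        have h' := hindep 1 0 (fun θ => by
          rw [heq θ t]; linarith [h.2])
        exact one_ne_zero h'.1
      · exact one_ne_zero (hindep 1 0 fun θ => (hne ⟨θ⟩).elim).1
    have hne : ∀ p q : Θ, p < q → ¬(f z₂ p = 0 ∧ -f z₁ p = 0) := by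
      rintro p q hpq ⟨h2, h1⟩
      rw [neg_eq_zero] at h1
      -- If `v p = 0`, a combination that also vanishes at `q` has two ordered zeros.
      by_cases hq : f z₁ q = 0
      · exact (two 1 0 (by simp)).2 p q hpq ⟨by simp [h1], by simp [hq]⟩
      · exact (two (f z₂ q) (-f z₁ q) (by simp [hq])).2 p q hpq
          ⟨by simp [h1, h2], by ring⟩
    have hne' : ∀ p q : Θ, p < q → ¬(f z₂ q = 0 ∧ -f z₁ q = 0) := by
      rintro p q hpq ⟨h2, h1⟩
      rw [neg_eq_zero] at h1
      by_cases hp : f z₁ p = 0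
      · exact (two 1 0 (by simp)).2 p q hpq ⟨by simp [hp], by simp [h1]⟩
      · exact (two (f z₂ p) (-f z₁ p) (by simp [hp])).2 p q hpq
          ⟨by ring, by simp [h1, h2]⟩
    let D : Θ → Θ → ℝ := fun l h => f z₁ h * f z₂ l - f z₁ l * f z₂ h
    have hleft : ∀ l a b : Θ, l ≤ a → a < b → 0 < D l b * D a b := by
      intro l a b hla hab
      have := (two _ _ (hne' a b hab)).mul_pos (p := b) (by ring) hla (.inl hab)
      calc 0 < _ := this
        _ = _ := by simp only [D]; ring
    have hright : ∀ l b u : Θ, l < b → b ≤ u → 0 < D l b * D l u := by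
      intro l b u hlb' hbu
      have := (two _ _ (hne l b hlb')).mul_pos (p := l) (by ring) hbu (.inr hlb')
      calc 0 < _ := this
        _ = _ := by simp only [D]; ring
    have hout : ∀ l a b u : Θ, l ≤ a → a < b → b ≤ u → (0 < D a b ↔ 0 < D l u) ∧ D a b ≠ 0 := by
      intro l a b u h1 h2 h3
      have e1 := hleft l a b h1 h2
      have e2 := hright l b u (h1.trans_lt h2) h3
      exact ⟨(pos_iff_pos_of_mul_pos e1).symm.trans (pos_iff_pos_of_mul_pos e2),
        right_ne_zero_of_mul e1.ne'⟩
    have hsame : ∀ a b : Θ, a < b → (0 < D a b ↔ 0 < D l₀ h₀) ∧ D a b ≠ 0 := by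
      intro a b hab
      obtain ⟨l, hl1, hl2⟩ := hlb a l₀
      obtain ⟨u, hu1, hu2⟩ := hub b h₀
      have e1 := hout l a b u hl1 hab hu1
      have e2 := hout l l₀ h₀ u hl2 hlh₀ hu2
      exact ⟨e1.1.trans e2.1.symm, e1.2⟩
    have hD₀ : D l₀ h₀ ≠ 0 := (hsame l₀ h₀ hlh₀).2
    -- Cramer's rule for the coefficients that match `f z` at `l₀` and `h₀`.
    refine ⟨fun z => (f z h₀ * f z₂ l₀ - f z l₀ * f z₂ h₀) / D l₀ h₀,
      fun z => (f z₁ h₀ * f z l₀ - f z₁ l₀ * f z h₀) / D l₀ h₀, ?_, ?_⟩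
    · by_cases hpos : 0 < D l₀ h₀
      · left
        intro a b hab
        exact sub_pos.1 ((hsame a b hab).1.2 hpos)
      · right
        intro a b hab
        have h1 := hsame a b hab
        have h2 : D a b < 0 := lt_of_le_of_ne (not_lt.1 fun h => hpos (h1.1.1 h)) h1.2
        simp only [D] at h2
        linarith
    · intro z θ
      have h := hf.three z z₁ z₂ (D l₀ h₀)
        (-(f z h₀ * f z₂ l₀ - f z l₀ * f z₂ h₀)) (-(f z₁ h₀ * f z l₀ - f z₁ l₀ * f z h₀))
      have h' := h.resolve_right fun hs => hs.2 l₀ h₀ hlh₀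
        ⟨by simp only [D]; ring, by simp only [D]; ring⟩
      field_simp
      linarith [h' θ]
  · rintro ⟨lam₁, lam₂, hord, hspan⟩ μ hμ
    have key : ∀ θ, (∑ᶠ z, μ z * f z θ) =
        (∑ z ∈ hμ.toFinset, μ z * lam₁ z) * f z₁ θ +
          (∑ z ∈ hμ.toFinset, μ z * lam₂ z) * f z₂ θ := by
      intro θ
      rw [finsum_eq_sum_of_support_subset (s := hμ.toFinset), Finset.sum_mul, Finset.sum_mul,
        ← Finset.sum_add_distrib]
      · refine Finset.sum_congr rfl fun z _ => ?_
        rw [hspan z θ]; ring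
      · intro z hz
        simp only [Function.mem_support] at hz
        simpa using left_ne_zero_of_mul hz
    simp only [key]
    rcases hord with h | h
    · exact ssc_of_dominates hub hlb h _ _
    · have := ssc_of_dominates hub hlb h (∑ z ∈ hμ.toFinset, μ z * lam₂ z)
        (∑ z ∈ hμ.toFinset, μ z * lam₁ z)
      simpa only [add_comm] using this
end

section
/- Let Θ ⊆ ℝ with the usual order, let X be a set, and let v : X × Θ → ℝ have single-crossing expectational differences (SCED). Let N be an odd positive integer, let θ₁ ≤ θ₂ ≤ … ≤ θ_N be elements of Θ, and let M = (N+1)/2. Then for all finite-support lotteries P, Q on X: the number of indices i ∈ {1,…,N} with Σ_x P(x)·v(x,θ_i) ≥ Σ_x Q(x)·v(x,θ_i) is at least N/2 if and only if Σ_x P(x)·v(x,θ_M) ≥ Σ_x Q(x)·v(x,θ_M). Consequently, the majority preference relation P ⪰_maj Q, defined to hold when at least N/2 of the individuals i weakly prefer P to Q, is transitive. -/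
/-- At least half of the `N` individuals (with types `θs i`) weakly prefer
lottery `P` to lottery `Q`. -/
def MajPrefers {X Θ' : Type*} {N : ℕ} (v : X → Θ' → ℝ) (θs : Fin N → Θ')
    (P Q : X → ℝ) : Prop :=
  (N : ℝ) / 2 ≤
    ({i : Fin N | (∑ᶠ x, Q x * v x (θs i)) ≤ ∑ᶠ x, P x * v x (θs i)} : Set (Fin N)).ncard

/-- For an odd number of indices, the median index lies in an up-closed or down-closed set exactly
when that set contains at least half of the indices: the set either contains the `(N + 1) / 2`
indices on one side of the median (median included), or lies among the `(N - 1) / 2` indices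
strictly on the other side. -/
lemma half_le_ncard_iff_median_mem {N : ℕ} (hodd : Odd N) (m : Fin N) (hm : (m : ℕ) = N / 2)
    (S : Set (Fin N)) (hS : IsUpperSet S ∨ IsLowerSet S) :
    (N : ℝ) / 2 ≤ S.ncard ↔ m ∈ S := by
  obtain ⟨k, rfl⟩ := hodd
  have hmk : (m : ℕ) = k := by omega
  have key : ((2 * k + 1 : ℕ) : ℝ) / 2 ≤ S.ncard ↔ k + 1 ≤ S.ncard := by
    rw [div_le_iff₀ (by norm_num)]
    norm_cast
    omega
  rw [key]
  constructor
  · intro h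
    by_contra hmS
    have hle : S.ncard ≤ k := by
      rcases hS with hS | hS
      · have hsub : S ⊆ (Finset.Ioi m : Finset (Fin (2 * k + 1))) := fun i hi => by
          simpa using lt_of_not_ge fun hle => hmS (hS hle hi)
        have := Set.ncard_le_ncard hsub
        rw [Set.ncard_coe_finset, Fin.card_Ioi] at this
        omega
      · have hsub : S ⊆ (Finset.Iio m : Finset (Fin (2 * k + 1))) := fun i hi => by
          simpa using lt_of_not_ge fun hle => hmS (hS hle hi)
        have := Set.ncard_le_ncard hsub
        rw [Set.ncard_coe_finset, Fin.card_Iio] at this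
        omega
    omega
  · intro hmS
    rcases hS with hS | hS
    · have hsub : ((Finset.Ici m : Finset (Fin (2 * k + 1))) : Set _) ⊆ S := fun i hi =>
        hS (by simpa using hi) hmS
      have := Set.ncard_le_ncard hsub
      rw [Set.ncard_coe_finset, Fin.card_Ici] at this
      omega
    · have hsub : ((Finset.Iic m : Finset (Fin (2 * k + 1))) : Set _) ⊆ S := fun i hi =>
        hS (by simpa using hi) hmS
      have := Set.ncard_le_ncard hsub
      rw [Set.ncard_coe_finset, Fin.card_Iic] at this
      omega

/-- Under SCED, majority preference between any two lotteries
coincides with the preference of the median individual; consequently the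
majority preference relation is transitive. -/
theorem sced_majority_is_median_and_transitive (Θ : Set ℝ) {X : Type*}
    (v : X → Θ → ℝ) (hsced : SCED v)
    (N : ℕ) (hodd : Odd N) (hpos : 0 < N)
    (θs : Fin N → Θ) (hmono : Monotone θs) :
    (∀ P Q : X → ℝ, IsLottery P → IsLottery Q →
      (MajPrefers v θs P Q ↔
        (∑ᶠ x, Q x * v x (θs ⟨N / 2, Nat.div_lt_self hpos one_lt_two⟩)) ≤
          ∑ᶠ x, P x * v x (θs ⟨N / 2, Nat.div_lt_self hpos one_lt_two⟩))) ∧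
    (∀ P Q R : X → ℝ, IsLottery P → IsLottery Q → IsLottery R →
      MajPrefers v θs P Q → MajPrefers v θs Q R → MajPrefers v θs P R) := by
  have sign_nonneg : ∀ r : ℝ, 0 ≤ Real.sign r ↔ 0 ≤ r := fun r => by
    rcases lt_trichotomy r 0 with h | rfl | h
    · norm_num [Real.sign_of_neg h, h.not_ge]
    · simp
    · simp [Real.sign_of_pos h, h.le]
  have median : ∀ P Q : X → ℝ, IsLottery P → IsLottery Q →
      (MajPrefers v θs P Q ↔
        (∑ᶠ x, Q x * v x (θs ⟨N / 2, Nat.div_lt_self hpos one_lt_two⟩)) ≤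
          ∑ᶠ x, P x * v x (θs ⟨N / 2, Nat.div_lt_self hpos one_lt_two⟩)) := by
    intro P Q hP hQ
    refine half_le_ncard_iff_median_mem hodd ⟨N / 2, Nat.div_lt_self hpos one_lt_two⟩ rfl
      {i : Fin N | (∑ᶠ x, Q x * v x (θs i)) ≤ ∑ᶠ x, P x * v x (θs i)} ?_
    rcases hsced P Q hP hQ with h | h
    · left
      intro i j hij hi
      have hi' := (sign_nonneg _).2 (sub_nonneg.2 hi)
      exact sub_nonneg.1 ((sign_nonneg _).1 (hi'.trans (h (hmono hij))))
    · right
      intro i j hij hi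
      have hi' := (sign_nonneg _).2 (sub_nonneg.2 hi)
      exact sub_nonneg.1 ((sign_nonneg _).1 (hi'.trans (h (hmono hij))))
  refine ⟨median, fun P Q R hP hQ hR hPQ hQR => ?_⟩
  rw [median P Q hP hQ] at hPQ
  rw [median Q R hQ hR] at hQR
  exact (median P R hP hR).2 (hQR.trans hPQ)
end
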